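/- arXiv:2406.01828 — 6 statements merged into one kernel-verified Lean document; each statement's English description precedes it below -/
import Mathlib

section
/- Let T₀ ≥ 0 be a real number. Suppose that for every complex number s = σ + it with σ > 1/2 and t > T₀ at which ζ(s) ≠ 0 one has −Re(ζ'(s)/ζ(s)) ≤ (1/2)·log(t/(2π)). Then ζ has no zeros s with Re s > 1/2 and Im s > T₀. -/
open Complex Real

/-- If for every `s = σ + it` with `σ > 1/2`, `t > T₀` and `ζ(s) ≠ 0` one has
`-Re(ζ'(s)/ζ(s)) ≤ (1/2)·log(t/(2π))`, then `ζ` has no zeros with `Re s > 1/2`, `Im s > T₀`. -/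
theorem spectral_flow_bound_implies_no_zeros (T₀ : ℝ) (hT₀ : 0 ≤ T₀)
    (hbound : ∀ σ t : ℝ, 1 / 2 < σ → T₀ < t →
      riemannZeta (σ + t * Complex.I) ≠ 0 →
      -(deriv riemannZeta (σ + t * Complex.I) / riemannZeta (σ + t * Complex.I)).re ≤
        (1 / 2) * Real.log (t / (2 * Real.pi))) :
    ∀ s : ℂ, 1 / 2 < s.re → T₀ < s.im → riemannZeta s ≠ 0 := by
  intro s hs ht hz
  have hne1 : s ≠ 1 := by
    rintro rfl
    simp at ht
    linarith
  have hdiff : DifferentiableOn ℂ riemannZeta ({1}ᶜ : Set ℂ) := fun z hz =>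
    (differentiableAt_riemannZeta hz).differentiableWithinAt
  have han : AnalyticOnNhd ℂ riemannZeta ({1}ᶜ : Set ℂ) :=
    hdiff.analyticOnNhd isOpen_compl_singleton
  have hpre : IsPreconnected ({1}ᶜ : Set ℂ) :=
    (isConnected_compl_singleton_of_one_lt_rank (by simp) 1).isPreconnected
  have hf : AnalyticAt ℂ riemannZeta s := han s hne1
  have htop : analyticOrderAt riemannZeta s ≠ ⊤ := by
    intro h
    rw [analyticOrderAt_eq_top] at h
    have h2 := han.eqOn_zero_of_preconnected_of_eventuallyEq_zero hpre hne1 h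
      (show (2 : ℂ) ∈ ({1}ᶜ : Set ℂ) by simp)
    exact riemannZeta_ne_zero_of_one_le_re (by simp) h2
  obtain ⟨n, hn⟩ := ENat.ne_top_iff_exists.mp htop
  obtain ⟨g, hg, hgs, hfg⟩ := hf.analyticOrderAt_eq_natCast.mp hn.symm
  have hn0 : n ≠ 0 := by
    rintro rfl
    have := hfg.self_of_nhds
    simp [hz] at this
    exact hgs this.symm
  have hev : ∀ᶠ z in nhds s, z ≠ s → riemannZeta z ≠ 0 ∧
      (z - s) * (deriv riemannZeta z / riemannZeta z) = n + (z - s) * (deriv g z / g z) := by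
    filter_upwards [hfg.eventually_nhds, hg.continuousAt.eventually_ne hgs,
      hg.eventually_analyticAt] with z h1 h2 h3 h4
    have h5 : z - s ≠ 0 := sub_ne_zero.mpr h4
    have h6 : riemannZeta z = (z - s) ^ n * g z := h1.self_of_nhds
    have hd : deriv riemannZeta z = n * (z - s) ^ (n - 1) * g z + (z - s) ^ n * deriv g z := by
      rw [Filter.EventuallyEq.deriv_eq h1]
      have := ((((hasDerivAt_id z).sub_const s).pow n).mul h3.differentiableAt.hasDerivAt).deriv
      simp at this
      exact this
    refine ⟨by rw [h6]; exact mul_ne_zero (pow_ne_zero _ h5) h2, ?_⟩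
    rw [hd, h6]
    obtain ⟨m, rfl⟩ := Nat.exists_eq_succ_of_ne_zero hn0
    simp only [Nat.succ_eq_add_one, Nat.add_sub_cancel]
    field_simp
    ring
  have hpath : Filter.Tendsto (fun e : ℝ => s - (e : ℂ)) (nhds 0) (nhds s) := by
    have : Continuous (fun e : ℝ => s - (e : ℂ)) := by fun_prop
    simpa using this.tendsto 0
  set C := (1 / 2) * Real.log (s.im / (2 * Real.pi)) with hC
  have hcont : ContinuousAt (fun z => deriv g z / g z) s :=
    hg.deriv.continuousAt.div hg.continuousAt hgs
  have hlim : Filter.Tendsto (fun e : ℝ => e * (C + (deriv g (s - e) / g (s - e)).re))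
      (nhdsWithin 0 (Set.Ioi 0)) (nhds 0) := by
    have h1 := (Complex.continuous_re.tendsto _).comp (hcont.tendsto.comp hpath)
    have h2 := (Filter.tendsto_id (x := nhds (0 : ℝ))).mul (h1.const_add C)
    rw [zero_mul] at h2
    exact h2.mono_left nhdsWithin_le_nhds
  have hle : (n : ℝ) ≤ 0 := by
    refine ge_of_tendsto hlim ?_
    filter_upwards [nhdsWithin_le_nhds (hpath.eventually hev), self_mem_nhdsWithin,
      nhdsWithin_le_nhds (Iio_mem_nhds (show (0 : ℝ) < s.re - 1 / 2 by linarith))]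
      with e he hpos hlt
    have hpos' : 0 < e := hpos
    have hlt' : e < s.re - 1 / 2 := hlt
    obtain ⟨hnz, heq⟩ := he (by simpa using hpos'.ne')
    have hw : (((s.re - e : ℝ) : ℂ) + (s.im : ℂ) * Complex.I) = s - e := by
      apply Complex.ext <;> simp
    have hb := hbound (s.re - e) s.im (by linarith) ht (by rw [hw]; exact hnz)
    rw [hw] at hb
    have hre := congrArg Complex.re heq
    have h7 : s - (e : ℂ) - s = ((-e : ℝ) : ℂ) := by push_cast; ring
    rw [h7, Complex.add_re, Complex.re_ofReal_mul, Complex.re_ofReal_mul, Complex.natCast_re] at hre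
    have := mul_le_mul_of_nonneg_left hb hpos'.le
    rw [← hC] at this
    linarith
  have : 0 < (n : ℝ) := by exact_mod_cast Nat.pos_of_ne_zero hn0
  linarith
end

section
/- Assume the Riemann Hypothesis. Then there exist constants C > 0 and T₀ > 0 such that for every complex number s = σ + it with σ > 1/2 and t > T₀ one has −Re(ζ'(s)/ζ(s)) ≤ (1/2)·log(t/(2π)) + C/t². -/
open Complex Real
open Filter Topology Set

lemma sfb_artanh {v : ℝ} (h0 : 0 ≤ v) (h1 : v ≤ 1 / 2) :
    Real.log (1 + v) - Real.log (1 - v) ≤ 2 * v + 2 * v ^ 3 := by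
  have key : MonotoneOn (fun v : ℝ => 2 * v + 2 * v ^ 3 - (Real.log (1 + v) - Real.log (1 - v)))
      (Icc 0 (1 / 2)) := by
    have hd : ∀ x ∈ Icc (0 : ℝ) (1 / 2), HasDerivAt
        (fun v : ℝ => 2 * v + 2 * v ^ 3 - (Real.log (1 + v) - Real.log (1 - v)))
        (2 + 6 * x ^ 2 - (1 / (1 + x) - -1 / (1 - x))) x := by
      intro x hx
      have e1 : HasDerivAt (fun v : ℝ => 1 + v) 1 x := (hasDerivAt_id x).const_add 1
      have e2 : HasDerivAt (fun v : ℝ => 1 - v) (-1) x := (hasDerivAt_id x).const_sub 1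
      have e3 : HasDerivAt (fun v : ℝ => 2 * v + 2 * v ^ 3) (2 + 6 * x ^ 2) x := by
        have a := ((hasDerivAt_id x).const_mul 2).add ((hasDerivAt_pow 3 x).const_mul 2)
        refine a.congr_deriv ?_
        norm_num; ring
      exact e3.sub ((e1.log (by linarith [hx.1])).sub (e2.log (by linarith [hx.2])))
    apply monotoneOn_of_deriv_nonneg (convex_Icc _ _)
    · exact fun x hx => (hd x hx).continuousAt.continuousWithinAt
    · exact fun x hx => (hd x (interior_subset hx)).differentiableAt.differentiableWithinAt
    · intro x hx
      have hx := interior_subset hx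
      rw [(hd x hx).deriv]
      have a1 : 0 < 1 + x := by linarith [hx.1]
      have a2 : 0 < 1 - x := by linarith [hx.2]
      have : 2 + 6 * x ^ 2 - (1 / (1 + x) - -1 / (1 - x))
        = x ^ 2 * (4 - 6 * x ^ 2) / ((1 + x) * (1 - x)) := by
        field_simp; ring
      rw [this]
      have : 0 ≤ 4 - 6 * x ^ 2 := by nlinarith [hx.1, hx.2]
      positivity
  have := key (left_mem_Icc.2 (by norm_num)) ⟨h0, h1⟩ h0
  simp at this
  linarith

noncomputable def sfbP (y u : ℝ) : ℝ :=
  1 / 2 * Real.log ((u - 1 / 2) ^ 2 + y ^ 2) + 4 / ((u + y - 1) * (u + y))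

lemma sfbP_step {y u : ℝ} (hy : 2 ≤ y) (hu : 0 < u) :
    sfbP y (u + 1) - sfbP y u ≤ u / (u ^ 2 + y ^ 2) := by
  set A := u ^ 2 + y ^ 2 + 1 / 4 with hA
  have hApos : 0 < A := by positivity
  set v := u / A with hv
  have hv0 : 0 ≤ v := by positivity
  have huv : u = v * A := by rw [hv]; field_simp
  have hv1 : v ≤ 1 / 2 := by
    rw [hv, div_le_iff₀ hApos]; nlinarith [sq_nonneg (u - 1)]
  have hv2 : v ≤ u / (u ^ 2 + y ^ 2) := by
    rw [hv]; apply div_le_div_of_nonneg_left <;> first | positivity | linarith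
  have hv3 : v ≤ 2 / (u + y) := by
    rw [hv, div_le_div_iff₀ hApos (by positivity)]; nlinarith [sq_nonneg (u - y)]
  have e1 : (u + 1 - 1 / 2) ^ 2 + y ^ 2 = A * (1 + v) := by
    rw [mul_add, mul_comm A v, ← huv]; rw [hA]; ring
  have e2 : (u - 1 / 2) ^ 2 + y ^ 2 = A * (1 - v) := by
    rw [mul_sub, mul_comm A v, ← huv]; rw [hA]; ring
  unfold sfbP
  rw [e1, e2, Real.log_mul (by positivity) (by linarith), Real.log_mul (by positivity) (by linarith)]
  have h1 := sfb_artanh hv0 hv1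
  set a := u + y with ha
  have ha2 : 2 < a := by linarith
  have h2 : 4 / ((a - 1) * a) - 4 / (a * (a + 1)) = 8 / ((a - 1) * a * (a + 1)) := by
    have : a - 1 ≠ 0 := by linarith
    field_simp; ring
  have h3 : v ^ 3 ≤ 8 / ((a - 1) * a * (a + 1)) := by
    calc v ^ 3 ≤ (2 / a) ^ 3 := by gcongr
      _ = 8 / a ^ 3 := by ring
      _ ≤ _ := by
        have : 0 < a - 1 := by linarith
        gcongr
        nlinarith
  have e3 : (u + 1 + y - 1) * (u + 1 + y) = a * (a + 1) := by rw [ha]; ring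
  rw [e3]
  linarith

lemma sfb_sum {y x : ℝ} (hy : 2 ≤ y) (hx : 0 < x) (n : ℕ) :
    sfbP y (x + n) - sfbP y x ≤ ∑ j ∈ Finset.range n, (x + j) / ((x + j) ^ 2 + y ^ 2) := by
  induction n with
  | zero => simp
  | succ n ih =>
    rw [Finset.sum_range_succ]
    have := sfbP_step hy (u := x + n) (by positivity)
    push_cast
    rw [← add_assoc]
    linarith

lemma sfb_sum' {y x : ℝ} (hy : 2 ≤ y) (hx : 0 < x) (hx2 : x ≤ 2) (n : ℕ) (hn : 0 < n) :
    Real.log n - ∑ j ∈ Finset.range (n + 1), (x + j) / ((x + j) ^ 2 + y ^ 2)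
      ≤ Real.log y + 10 / y ^ 2 := by
  have h := sfb_sum hy hx (n + 1)
  have hn' : (0 : ℝ) < n := by exact_mod_cast hn
  have h1 : Real.log n ≤ sfbP y (x + (n + 1 : ℕ)) := by
    unfold sfbP
    have : 0 ≤ 4 / ((x + (n + 1 : ℕ) + y - 1) * (x + (n + 1 : ℕ) + y)) := by
      have : 0 ≤ x + (n + 1 : ℕ) + y - 1 := by push_cast; linarith
      positivity
    have h2 : Real.log ((n : ℝ) ^ 2) ≤ Real.log ((x + (n + 1 : ℕ) - 1 / 2) ^ 2 + y ^ 2) := by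
      apply Real.log_le_log (by positivity)
      push_cast; nlinarith
    rw [Real.log_pow] at h2
    push_cast at *
    linarith
  have h2 : sfbP y x ≤ Real.log y + 10 / y ^ 2 := by
    unfold sfbP
    have a1 : 4 / ((x + y - 1) * (x + y)) ≤ 8 / y ^ 2 := by
      have : 0 < x + y - 1 := by linarith
      rw [div_le_div_iff₀ (by positivity) (by positivity)]
      nlinarith
    have a2 : (x - 1 / 2) ^ 2 + y ^ 2 = y ^ 2 * (1 + (x - 1 / 2) ^ 2 / y ^ 2) := by
      field_simp; ring
    have a3 : Real.log (1 + (x - 1 / 2) ^ 2 / y ^ 2) ≤ (x - 1 / 2) ^ 2 / y ^ 2 := by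
      have := Real.log_le_sub_one_of_pos (x := 1 + (x - 1 / 2) ^ 2 / y ^ 2) (by positivity)
      linarith
    have a4 : (x - 1 / 2) ^ 2 / y ^ 2 ≤ 4 / y ^ 2 := by
      gcongr; nlinarith
    rw [a2, Real.log_mul (by positivity) (by positivity), Real.log_pow]
    have : (10 : ℝ) / y ^ 2 = 8 / y ^ 2 + 4 / y ^ 2 / 2 := by ring
    push_cast
    linarith
  linarith

lemma sfb_hasDerivAt_log_norm {f : ℂ → ℂ} {f' : ℂ} {x y : ℝ}
    (hf : HasDerivAt f f' (x + y * I)) (h0 : f (x + y * I) ≠ 0) :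
    HasDerivAt (fun u : ℝ => Real.log ‖f (u + y * I)‖) ((f' / f (x + y * I)).re) x := by
  have h1 : HasDerivAt (fun u : ℝ => f (u + y * I)) f' x := by
    have : HasDerivAt (fun u : ℝ => (u : ℂ) + y * I) 1 x := by
      simpa using (Complex.ofRealCLM.hasDerivAt (x := x)).add_const ((y : ℂ) * I)
    exact (HasDerivAt.comp x hf this).congr_deriv (by simp)
  have h2 := h1.norm_sq
  have h3 : 0 < ‖f (x + y * I)‖ := norm_pos_iff.2 h0
  have h4 := (h2.log (by positivity)).const_mul (1 / 2)
  have e : (fun u : ℝ => Real.log ‖f (u + y * I)‖) =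
      fun u : ℝ => 1 / 2 * Real.log (‖f (u + y * I)‖ ^ 2) := by
    funext u; rw [Real.log_pow]; push_cast; ring
  rw [e]
  refine h4.congr_deriv ?_
  rw [Complex.inner, Complex.div_re, Complex.sq_norm]
  have : Complex.normSq (f (x + y * I)) ≠ 0 := by simpa using h0
  simp
  field_simp

lemma sfb_log_GammaSeq {x y : ℝ} (hx : 0 < x) (n : ℕ) (hn : 0 < n) :
    Real.log ‖Complex.GammaSeq (x + y * I) n‖ = x * Real.log n + Real.log (n.factorial) -
      ∑ j ∈ Finset.range (n + 1), Real.log ‖((x + y * I : ℂ) + (j : ℂ))‖ := by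
  have hne : ∀ j : ℕ, (x + y * I : ℂ) + (j : ℂ) ≠ 0 := by
    intro j h
    have := congrArg Complex.re h
    simp at this
    have : (0 : ℝ) ≤ j := by positivity
    linarith
  have hn' : (0 : ℝ) < n := by exact_mod_cast hn
  unfold Complex.GammaSeq
  rw [norm_div, norm_mul, norm_prod, Complex.norm_natCast, Complex.norm_natCast_cpow_of_pos hn,
    Real.log_div, Real.log_mul, Real.log_rpow hn', Real.log_prod]
  · simp
  · exact fun j _ => norm_ne_zero_iff.2 (hne j)
  · positivity
  · positivity
  · positivity
  · exact Finset.prod_ne_zero_iff.2 fun j _ => norm_ne_zero_iff.2 (hne j)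

lemma sfb_log_Gamma_lip {x₁ x₂ y : ℝ} (hy : 2 ≤ y) (hx : 0 < x₁) (h12 : x₁ ≤ x₂) (hx2 : x₂ ≤ 2) :
    Real.log ‖Complex.Gamma (x₂ + y * I)‖ - Real.log ‖Complex.Gamma (x₁ + y * I)‖ ≤
      (Real.log y + 10 / y ^ 2) * (x₂ - x₁) := by
  have hG : ∀ x : ℝ, 0 < x → Complex.Gamma (x + y * I) ≠ 0 := fun x hx =>
    Complex.Gamma_ne_zero_of_re_pos (by simpa using hx)
  have hlim : ∀ x : ℝ, 0 < x → Tendsto (fun n => Real.log ‖Complex.GammaSeq (x + y * I) n‖) atTop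
      (𝓝 (Real.log ‖Complex.Gamma (x + y * I)‖)) := fun x hx =>
    (Complex.GammaSeq_tendsto_Gamma _).norm.log (norm_ne_zero_iff.2 (hG x hx))
  refine le_of_tendsto ((hlim x₂ (by linarith)).sub (hlim x₁ hx)) ?_
  filter_upwards [eventually_gt_atTop 0] with n hn
  rw [sfb_log_GammaSeq (by linarith) n hn, sfb_log_GammaSeq hx n hn]
  set F : ℝ → ℝ := fun x => x * Real.log n + Real.log (n.factorial) -
      ∑ j ∈ Finset.range (n + 1), Real.log ‖((x + y * I : ℂ) + (j : ℂ))‖ with hF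
  have hd : ∀ x ∈ Icc x₁ x₂, HasDerivAt F
      (Real.log n - ∑ j ∈ Finset.range (n + 1), (x + j) / ((x + j) ^ 2 + y ^ 2)) x := by
    intro x hx'
    have hx0 : 0 < x := lt_of_lt_of_le hx hx'.1
    apply HasDerivAt.sub
    · simpa using ((hasDerivAt_id x).mul_const (Real.log n)).add_const (Real.log (n.factorial))
    · apply HasDerivAt.fun_sum
      intro j _
      have hne : (x + y * I : ℂ) + (j : ℂ) ≠ 0 := by
        intro h
        have := congrArg Complex.re h
        simp at this
        have : (0 : ℝ) ≤ j := by positivity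
        linarith
      have := sfb_hasDerivAt_log_norm (f := fun z => z + (j : ℂ)) (x := x) (y := y)
        ((hasDerivAt_id _).add_const (j : ℂ)) hne
      refine this.congr_deriv ?_
      simp [Complex.normSq_apply]
      ring_nf
  refine (convex_Icc x₁ x₂).image_sub_le_mul_sub_of_deriv_le
    (fun x hx => (hd x hx).continuousAt.continuousWithinAt)
    (fun x hx => (hd x (interior_subset hx)).differentiableAt.differentiableWithinAt)
    ?_ x₁ (left_mem_Icc.2 h12) x₂ (right_mem_Icc.2 h12) h12
  intro x hx'
  have hx' := interior_subset hx'
  rw [(hd x hx').deriv]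
  exact sfb_sum' hy (by linarith [hx'.1]) (by linarith [hx'.2]) n hn

lemma sfb_digamma {x y : ℝ} (hy : 2 ≤ y) (hx : 0 < x) (hx2 : x < 2) :
    (deriv Complex.Gamma (x + y * I) / Complex.Gamma (x + y * I)).re ≤
      Real.log y + 10 / y ^ 2 := by
  have hd : DifferentiableAt ℂ Complex.Gamma (x + y * I) := by
    apply Complex.differentiableAt_Gamma
    intro m h
    have := congrArg Complex.im h
    simp at this
    linarith
  have h := sfb_hasDerivAt_log_norm hd.hasDerivAt
    (Complex.Gamma_ne_zero_of_re_pos (by simpa using hx))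
  rw [hasDerivAt_iff_tendsto_slope] at h
  have h' := h.mono_left (nhdsWithin_mono x (show Ioi x ⊆ {x}ᶜ from fun u hu => ne_of_gt hu))
  refine le_of_tendsto h' ?_
  filter_upwards [Ioo_mem_nhdsGT hx2] with u hu
  rw [slope_def_field, div_le_iff₀ (by linarith [hu.1])]
  exact sfb_log_Gamma_lip hy hx hu.1.le hu.2.le
open MeasureTheory

lemma sfb_mellin_bound {f : ℝ → ℂ} (hf : ∀ s, MellinConvergent f s) (a b : ℝ) :
    ∃ M : ℝ, 0 ≤ M ∧ ∀ s : ℂ, a ≤ s.re → s.re ≤ b → ‖mellin f s‖ ≤ M := by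
  refine ⟨(∫ t in Ioi (0 : ℝ), ‖(t : ℂ) ^ ((a : ℂ) - 1) • f t‖) +
    ∫ t in Ioi (0 : ℝ), ‖(t : ℂ) ^ ((b : ℂ) - 1) • f t‖, ?_, ?_⟩
  · exact add_nonneg (integral_nonneg fun _ => norm_nonneg _)
      (integral_nonneg fun _ => norm_nonneg _)
  intro s ha hb
  rw [← integral_add (hf a).norm (hf b).norm]
  unfold mellin
  refine (norm_integral_le_integral_norm _).trans ?_
  refine setIntegral_mono_on (hf s).norm ((hf a).norm.add (hf b).norm) measurableSet_Ioi ?_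
  intro t ht
  have ht : 0 < t := ht
  simp only [norm_smul]
  rw [← add_mul]
  gcongr
  rw [Complex.norm_cpow_eq_rpow_re_of_pos ht, Complex.norm_cpow_eq_rpow_re_of_pos ht,
    Complex.norm_cpow_eq_rpow_re_of_pos ht]
  simp only [sub_re, one_re, ofReal_re]
  rcases le_total 1 t with h | h
  · have := Real.rpow_le_rpow_of_exponent_le h (show s.re - 1 ≤ b - 1 by linarith)
    have : 0 ≤ t ^ (a - 1) := by positivity
    linarith
  · have := Real.rpow_le_rpow_of_exponent_ge ht h (show a - 1 ≤ s.re - 1 by linarith)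
    have : 0 ≤ t ^ (b - 1) := by positivity
    linarith

lemma sfb_L0_bound (a b : ℝ) :
    ∃ M : ℝ, 0 ≤ M ∧ ∀ s : ℂ, a ≤ s.re → s.re ≤ b → ‖completedRiemannZeta₀ s‖ ≤ M := by
  obtain ⟨M, hM0, hM⟩ := sfb_mellin_bound
    (f := (HurwitzZeta.hurwitzEvenFEPair 0).f_modif)
    (fun s => (HurwitzZeta.hurwitzEvenFEPair 0).isStrongFEPair_toStrongFEPair.hasMellin s |>.1)
    (a / 2) (b / 2)
  refine ⟨M, hM0, fun s ha hb => ?_⟩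
  have e : completedRiemannZeta₀ s =
    mellin (HurwitzZeta.hurwitzEvenFEPair 0).f_modif (s / 2) / 2 := rfl
  have hre : (s / 2).re = s.re / 2 := by simp
  have := hM (s / 2) (by rw [hre]; linarith) (by rw [hre]; linarith)
  rw [e, norm_div]
  simp
  linarith

/-- The entire function `s (s - 1) Λ(s)`. -/
noncomputable def sfbXi (s : ℂ) : ℂ := 1 + s * (s - 1) * completedRiemannZeta₀ s

lemma sfbXi_differentiable : Differentiable ℂ sfbXi := by
  unfold sfbXi
  have := differentiable_completedZeta₀
  fun_prop

lemma sfbXi_one_sub (s : ℂ) : sfbXi (1 - s) = sfbXi s := by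
  unfold sfbXi
  rw [completedRiemannZeta₀_one_sub]; ring

lemma sfbXi_eq {s : ℂ} (hs : 0 < s.re) (h1 : s ≠ 1) :
    sfbXi s = s * (s - 1) * (Gammaℝ s * riemannZeta s) := by
  have h0 : s ≠ 0 := by rintro rfl; simp at hs
  have h1' : s - 1 ≠ 0 := sub_ne_zero.2 h1
  have h1'' : 1 - s ≠ 0 := sub_ne_zero.2 h1.symm
  rw [riemannZeta_def_of_ne_zero h0, mul_div_cancel₀ _ (Gammaℝ_ne_zero_of_re_pos hs),
    completedRiemannZeta_eq]
  unfold sfbXi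
  field_simp
  ring

lemma sfb_Gammaℝ_conj (s : ℂ) : Gammaℝ (starRingEnd ℂ s) = starRingEnd ℂ (Gammaℝ s) := by
  unfold Gammaℝ
  rw [map_mul, ← Complex.Gamma_conj]
  have hpi : (π : ℂ).arg ≠ π := by
    rw [Complex.arg_ofReal_of_nonneg pi_pos.le]; exact pi_pos.ne
  have := Complex.cpow_conj (π : ℂ) (-s / 2) hpi
  rw [Complex.conj_ofReal] at this
  rw [← this]
  simp [Complex.conj_ofNat]

lemma sfbXi_conj {s : ℂ} (hs : 0 < s.re) : sfbXi (starRingEnd ℂ s) = starRingEnd ℂ (sfbXi s) := by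
  by_cases h1 : s = 1
  · subst h1; simp [sfbXi]
  · rw [sfbXi_eq hs h1, sfbXi_eq (by simpa using hs), sfb_Gammaℝ_conj, riemannZeta_conj]
    · simp
    · intro h; apply h1; simpa using congrArg (starRingEnd ℂ) h

lemma sfbXi_ne_zero
    (hRH : ∀ ρ : ℂ, riemannZeta ρ = 0 → 0 < ρ.re → ρ.re < 1 → ρ.re = 1 / 2)
    {s : ℂ} (hs : 1 / 2 < s.re) : sfbXi s ≠ 0 := by
  by_cases h1 : s = 1
  · subst h1; simp [sfbXi]
  · have h0 : s ≠ 0 := by rintro rfl; norm_num at hs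
    rw [sfbXi_eq (by linarith) h1]
    refine mul_ne_zero (mul_ne_zero h0 (sub_ne_zero.2 h1))
      (mul_ne_zero (Gammaℝ_ne_zero_of_re_pos (by linarith)) ?_)
    intro hz
    rcases lt_or_ge s.re 1 with h | h
    · linarith [hRH s hz (by linarith) h]
    · exact riemannZeta_ne_zero_of_one_le_re h hz

lemma sfbXi_upper : ∃ K : ℝ, 0 < K ∧ ∀ s : ℂ, 0 ≤ s.re → s.re ≤ 4 →
    ‖sfbXi s‖ ≤ Real.exp (K * (1 + |s.im|)) := by
  obtain ⟨M, hM0, hM⟩ := sfb_L0_bound 0 4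
  refine ⟨2 * M + 4, by positivity, fun s h0 h4 => ?_⟩
  have a1 : ‖s‖ ≤ 4 + |s.im| := (Complex.norm_le_abs_re_add_abs_im s).trans (by
    rw [abs_of_nonneg h0]; linarith)
  have a2 : ‖s - 1‖ ≤ 4 + |s.im| := (Complex.norm_le_abs_re_add_abs_im _).trans (by
    simp only [sub_re, one_re, sub_im, one_im, sub_zero]
    have : |s.re - 1| ≤ 4 := by rw [abs_le]; constructor <;> linarith
    linarith)
  have a3 : (4 + |s.im|) ^ 2 ≤ 2 * Real.exp (4 + |s.im|) := by
    have := Real.quadratic_le_exp_of_nonneg (x := 4 + |s.im|) (by positivity)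
    have : 0 ≤ |s.im| := abs_nonneg _
    linarith
  have a4 : 1 ≤ Real.exp (4 + |s.im|) := Real.one_le_exp (by positivity)
  calc ‖sfbXi s‖ ≤ 1 + ‖s‖ * ‖s - 1‖ * ‖completedRiemannZeta₀ s‖ := by
        unfold sfbXi
        refine (norm_add_le _ _).trans ?_
        simp
    _ ≤ 1 + (4 + |s.im|) * (4 + |s.im|) * M := by
        gcongr
        exact hM s h0 h4
    _ ≤ (2 * M + 1) * Real.exp (4 + |s.im|) := by nlinarith
    _ ≤ Real.exp (2 * M) * Real.exp (4 + |s.im|) := by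
        gcongr; exact Real.add_one_le_exp _
    _ = Real.exp (2 * M + (4 + |s.im|)) := (Real.exp_add _ _).symm
    _ ≤ _ := by
        apply Real.exp_le_exp.2
        nlinarith [abs_nonneg s.im, mul_nonneg hM0 (abs_nonneg s.im)]

lemma sfb_zeta_sub_one {s : ℂ} (hs : 2 ≤ s.re) : ‖riemannZeta s - 1‖ ≤ 65 / 100 := by
  have hz : riemannZeta s = ∑' n : ℕ, 1 / ((n : ℂ) + 1) ^ s :=
    zeta_eq_tsum_one_div_nat_add_one_cpow (by linarith)
  have hsum0 : Summable fun n : ℕ => 1 / ((n : ℂ)) ^ s :=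
    Complex.summable_one_div_nat_cpow.2 (by linarith)
  have hsum : Summable fun n : ℕ => 1 / ((n : ℂ) + 1) ^ s := by
    have := (summable_nat_add_iff 1).2 hsum0
    simpa using this
  rw [hsum.tsum_eq_zero_add] at hz
  have e : riemannZeta s - 1 = ∑' n : ℕ, 1 / (((n + 1 : ℕ) : ℂ) + 1) ^ s := by
    rw [hz]; simp
  have h2 := hasSum_zeta_two
  have h3 : HasSum (fun n : ℕ => 1 / (((n + 2 : ℕ) : ℝ)) ^ 2) (π ^ 2 / 6 - 1) := by
    have := (hasSum_nat_add_iff' 2).2 h2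
    simpa [Finset.sum_range_succ] using this
  rw [e]
  have hb : ∀ n : ℕ, ‖1 / (((n + 1 : ℕ) : ℂ) + 1) ^ s‖ ≤ 1 / (((n + 2 : ℕ) : ℝ)) ^ 2 := by
    intro n
    have : (((n + 1 : ℕ) : ℂ) + 1) = ((n + 2 : ℕ) : ℂ) := by push_cast; ring
    rw [this, norm_div, norm_one, Complex.norm_natCast_cpow_of_pos (by omega)]
    gcongr
    rw [← Real.rpow_natCast]
    apply Real.rpow_le_rpow_of_exponent_le
    · push_cast; linarith [(Nat.cast_nonneg n : (0 : ℝ) ≤ n)]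
    · exact_mod_cast hs
  refine (tsum_of_norm_bounded h3 hb).trans ?_
  nlinarith [Real.pi_lt_d4, Real.pi_gt_three]

lemma sfb_norm_Gamma_le {s : ℂ} (hs : s.re = 1) : ‖Complex.Gamma s‖ ≤ 1 := by
  have h1 : Real.Gamma 1 = 1 := Real.Gamma_one
  rw [Complex.Gamma_eq_integral (by linarith), Complex.GammaIntegral]
  rw [Real.Gamma_eq_integral one_pos] at h1
  rw [← h1]
  refine (norm_integral_le_integral_norm _).trans (le_of_eq ?_)
  refine setIntegral_congr_fun measurableSet_Ioi ?_
  intro x hx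
  have hx : 0 < x := hx
  simp only [norm_mul]
  rw [Complex.norm_cpow_eq_rpow_re_of_pos hx, Complex.norm_real, sub_re, one_re, hs,
    Real.norm_eq_abs, abs_of_pos (Real.exp_pos _)]

lemma sfb_norm_sin_le (z : ℂ) : ‖Complex.sin z‖ ≤ Real.exp |z.im| := by
  rw [Complex.sin, norm_div, norm_mul, Complex.norm_I]
  have a : ‖Complex.exp (-z * I)‖ ≤ Real.exp |z.im| := by
    rw [Complex.norm_exp]; apply Real.exp_le_exp.2; simp [le_abs_self]
  have b : ‖Complex.exp (z * I)‖ ≤ Real.exp |z.im| := by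
    rw [Complex.norm_exp]; apply Real.exp_le_exp.2; simp [neg_le_abs]
  have := norm_sub_le (Complex.exp (-z * I)) (Complex.exp (z * I))
  simp at *
  linarith

lemma sfb_Gamma_lower {y : ℝ} (hy : y ≠ 0) :
    π * |y| * Real.exp (-(π * |y|)) ≤ ‖Complex.Gamma (1 + y * I)‖ := by
  have hyI : (y : ℂ) * I ≠ 0 := by simp [hy]
  have h1 := Complex.Gamma_mul_Gamma_one_sub (y * I)
  have h2 := Complex.Gamma_add_one (y * I) hyI
  rw [add_comm] at h2
  have hs : Complex.sin (π * (y * I)) ≠ 0 := by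
    intro h
    rw [h, div_zero, mul_eq_zero] at h1
    rcases h1 with h1 | h1
    · rw [h1, mul_zero] at h2
      exact Complex.Gamma_ne_zero_of_re_pos (by simp) h2
    · exact Complex.Gamma_ne_zero_of_re_pos (by simp) h1
  have h3 : Complex.Gamma (1 + y * I) * Complex.Gamma (1 - y * I) * Complex.sin (π * (y * I))
      = π * (y * I) := by
    rw [h2, mul_assoc (y * I : ℂ), h1, mul_assoc, div_mul_cancel₀ _ hs]; ring
  have h4 := congrArg norm h3
  rw [norm_mul, norm_mul] at h4
  have h5 : ‖(π : ℂ) * (y * I)‖ = π * |y| := by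
    simp [abs_of_pos pi_pos]
  have h6 := sfb_norm_sin_le (π * (y * I))
  have h6' : |((π : ℂ) * (y * I)).im| = π * |y| := by simp [abs_mul, abs_of_pos pi_pos]
  rw [h6'] at h6
  have h7 := sfb_norm_Gamma_le (s := 1 - y * I) (by simp)
  rw [h5] at h4
  rw [Real.exp_neg, ← div_eq_mul_inv, div_le_iff₀ (Real.exp_pos _)]
  refine h4.symm.le.trans ?_
  have : ‖Complex.Gamma (1 + y * I)‖ * ‖Complex.Gamma (1 - y * I)‖ ≤
      ‖Complex.Gamma (1 + y * I)‖ * 1 := by gcongr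
  rw [mul_one] at this
  gcongr

lemma sfbXi_lower {T : ℝ} (hT : 1 ≤ |T|) :
    Real.exp (-(2 * (1 + |T|))) ≤ ‖sfbXi (2 + T * I)‖ := by
  have hT0 : T ≠ 0 := by rintro rfl; norm_num at hT
  rw [sfbXi_eq (by simp) (by intro h; have := congrArg Complex.re h; norm_num at this), Gammaℝ]
  simp only [norm_mul]
  have b1 : 2 ≤ ‖(2 + T * I : ℂ)‖ := by
    have := Complex.abs_re_le_norm (2 + T * I : ℂ); simpa using this
  have b2 : 1 ≤ ‖(2 + T * I - 1 : ℂ)‖ := by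
    have := Complex.abs_re_le_norm (2 + T * I - 1 : ℂ); norm_num at this; simpa using this
  have b3 : ‖(π : ℂ) ^ (-(2 + T * I : ℂ) / 2)‖ = π⁻¹ := by
    rw [Complex.norm_cpow_eq_rpow_re_of_pos pi_pos]
    have : (-(2 + T * I : ℂ) / 2).re = -1 := by simp
    rw [this, Real.rpow_neg_one]
  have b4 : π * |T / 2| * Real.exp (-(π * |T / 2|)) ≤ ‖Complex.Gamma ((2 + T * I) / 2)‖ := by
    have := sfb_Gamma_lower (y := T / 2) (by simpa using hT0)
    convert this using 3
    push_cast; ring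
  have b5 : 35 / 100 ≤ ‖riemannZeta (2 + T * I)‖ := by
    have h := sfb_zeta_sub_one (s := 2 + T * I) (by simp)
    have := norm_sub_norm_le (1 : ℂ) (1 - riemannZeta (2 + T * I))
    rw [norm_sub_rev 1 (riemannZeta _)] at this
    simp at this
    linarith
  rw [b3]
  have e2 : Real.exp (-2) ≤ 35 / 100 := by
    rw [Real.exp_neg, inv_le_comm₀ (Real.exp_pos _) (by norm_num)]
    have := Real.add_one_le_exp (2 : ℝ)
    linarith
  have b6 : Real.exp (-(2 * |T|)) ≤ Real.exp (-(π * |T / 2|)) := by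
    apply Real.exp_le_exp.2
    rw [abs_div]; simp
    nlinarith [Real.pi_le_four]
  have b7 : |T / 2| = |T| / 2 := by rw [abs_div]; simp
  calc Real.exp (-(2 * (1 + |T|))) = Real.exp (-2) * Real.exp (-(2 * |T|)) := by
        rw [← Real.exp_add]; congr 1; ring
    _ ≤ 35 / 100 * Real.exp (-(π * |T / 2|)) := by gcongr
    _ = 2 * 1 * (π⁻¹ * (π * (1 / 2) * Real.exp (-(π * |T / 2|))) * (35 / 100)) := by
        field_simp
    _ ≤ 2 * 1 * (π⁻¹ * (π * |T / 2| * Real.exp (-(π * |T / 2|))) * (35 / 100)) := by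
        gcongr; rw [b7]; linarith
    _ ≤ _ := by gcongr

lemma sfb_borel {f : ℂ → ℂ} (hf : Differentiable ℂ f) {c z : ℂ} {R r M : ℝ} (hM : 0 < M)
    (hr : 0 ≤ r) (hrR : r < R) (hne : ∀ w ∈ Metric.ball c R, f w ≠ 0)
    (hb : ∀ w ∈ Metric.ball c R, ‖f w‖ ≤ Real.exp M * ‖f c‖) (hz : dist z c ≤ r) :
    ‖f c‖ * Real.exp (-(2 * M * r / (R - r))) ≤ ‖f z‖ := by
  have hR : 0 < R := by linarith
  have hd : DifferentiableOn ℂ (fun w => deriv f w / f w) (Metric.ball c R) := by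
    have h1 : Differentiable ℂ (deriv f) := by
      have : ContDiff ℂ 2 f := hf.contDiff
      exact (this.differentiable_deriv_two)
    intro w hw
    exact (h1 w).differentiableWithinAt.div (hf w).differentiableWithinAt (hne w hw)
  obtain ⟨F, hF⟩ := hd.isExactOn_ball.with_val_at c 0
  have hc : c ∈ Metric.ball c R := Metric.mem_ball_self hR
  have hFc : F c = 0 := hF.1
  have hFd : ∀ w ∈ Metric.ball c R, HasDerivAt F (deriv f w / f w) w := hF.2
  have hconst : ∀ w ∈ Metric.ball c R, f w * Complex.exp (-F w) = f c := by
    intro w hw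
    have key : ∀ x ∈ Metric.ball c R, HasDerivAt (fun w => f w * Complex.exp (-F w)) 0 x := by
      intro x hx
      have := (hf x).hasDerivAt.mul ((hFd x hx).neg.cexp)
      refine this.congr_deriv ?_
      have := hne x hx
      field_simp
      ring
    have := (convex_ball c R).is_const_of_fderivWithin_eq_zero (𝕜 := ℂ)
      (f := fun w => f w * Complex.exp (-F w))
      (fun x hx => (key x hx).differentiableAt.differentiableWithinAt)
      (fun x hx => by
        rw [fderivWithin_of_isOpen Metric.isOpen_ball hx, (key x hx).hasFDerivAt.fderiv]
        ext; simp) hw hc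
    simpa [hFc] using this
  have hexp : ∀ w ∈ Metric.ball c R, ‖f w‖ = ‖f c‖ * Real.exp (F w).re := by
    intro w hw
    rw [← hconst w hw, norm_mul, Complex.norm_exp, mul_assoc, ← Real.exp_add]
    simp
  have hfc : 0 < ‖f c‖ := norm_pos_iff.2 (hne c hc)
  have hball : ∀ w, w ∈ Metric.ball (0 : ℂ) R → w + c ∈ Metric.ball c R := by
    intro w hw
    simpa [dist_eq_norm] using hw
  have hzb : z ∈ Metric.ball c R := lt_of_le_of_lt hz hrR
  have hz0 : ‖z - c‖ ≤ r := by rwa [← dist_eq_norm]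
  have hBC := Complex.borelCaratheodory_zero (f := fun w => F (w + c)) (z := z - c) hM (R := R)
    (by
      intro w hw
      have h1 := (hFd _ (hball w hw)).differentiableAt
      have : DifferentiableAt ℂ (fun w => F (w + c)) w :=
        DifferentiableAt.comp w h1 (by fun_prop)
      exact this.differentiableWithinAt)
    (by
      intro w hw
      have h1 := hb _ (hball w hw)
      rw [hexp _ (hball w hw), mul_comm] at h1
      exact Real.exp_le_exp.1 (le_of_mul_le_mul_right h1 hfc))
    hR (by rw [mem_ball_zero_iff]; linarith) (by simpa using hFc)
  simp only [sub_add_cancel] at hBC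
  rw [hexp z hzb]
  gcongr
  have h1 : -‖F z‖ ≤ (F z).re := (abs_le.1 (Complex.abs_re_le_norm _)).1
  have h2 : 2 * M * ‖z - c‖ / (R - ‖z - c‖) ≤ 2 * M * r / (R - r) := by
    have : 0 < R - r := by linarith
    gcongr
  linarith

lemma sfbXi_inv_bound
    (hRH : ∀ ρ : ℂ, riemannZeta ρ = 0 → 0 < ρ.re → ρ.re < 1 → ρ.re = 1 / 2)
    {h : ℝ} (h0 : 0 < h) (h1 : h ≤ 1 / 2) :
    ∃ K : ℝ, 0 < K ∧ ∀ s : ℂ, 1 / 2 + h / 2 ≤ s.re → s.re ≤ 2 + h → 1 ≤ |s.im| →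
      Real.exp (-(K * (1 + |s.im|))) ≤ ‖sfbXi s‖ := by
  obtain ⟨K, hK0, hK⟩ := sfbXi_upper
  set r := 3 / 2 - h / 2 with hr
  set R := 3 / 2 - h / 4 with hR
  have hr0 : 0 ≤ r := by rw [hr]; linarith
  have hrR : r < R := by rw [hr, hR]; linarith
  have hRr : 0 < R - r := by linarith
  refine ⟨2 + 2 * (5 / 2 * K + 2) * r / (R - r), by positivity, fun s hs1 hs2 hT => ?_⟩
  set T := s.im with hTdef
  set c : ℂ := 2 + T * I with hc
  have hlow := sfbXi_lower hT
  have hTn : 0 ≤ |T| := abs_nonneg T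
  have hin : ∀ w ∈ Metric.ball c R, |w.re - 2| < R ∧ |w.im - T| < R := by
    intro w hw
    rw [Metric.mem_ball, dist_eq_norm] at hw
    have a := Complex.abs_re_le_norm (w - c)
    have b := Complex.abs_im_le_norm (w - c)
    simp [hc] at a b
    constructor <;> linarith
  have hR2 : R ≤ 3 / 2 := by rw [hR]; linarith
  have := sfb_borel sfbXi_differentiable (c := c) (z := s) (R := R) (r := r)
    (M := (5 / 2 * K + 2) * (1 + |T|)) (by positivity) hr0 hrR
    (by
      intro w hw
      apply sfbXi_ne_zero hRH
      have := (abs_lt.1 (hin w hw).1).1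
      rw [hR] at this
      linarith)
    (by
      intro w hw
      have h3 := abs_lt.1 (hin w hw).1
      have h4 := (hin w hw).2
      have h5 : |w.im| ≤ |T| + 3 / 2 := by
        have := abs_sub_abs_le_abs_sub w.im T
        linarith
      have h6 := hK w (by linarith [h3.1]) (by linarith [h3.2])
      calc ‖sfbXi w‖ ≤ Real.exp (K * (1 + |w.im|)) := h6
        _ ≤ Real.exp ((5 / 2 * K + 2) * (1 + |T|) + -(2 * (1 + |T|))) := by
            apply Real.exp_le_exp.2
            nlinarith
        _ ≤ _ := by
            rw [Real.exp_add]
            gcongr)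
    (by
      rw [dist_eq_norm]
      have : s - c = ((s.re - 2 : ℝ) : ℂ) := by
        apply Complex.ext <;> simp [hc, hTdef]
      rw [this, Complex.norm_real, Real.norm_eq_abs, abs_le, hr]
      constructor <;> linarith)
  refine le_trans ?_ this
  calc Real.exp (-((2 + 2 * (5 / 2 * K + 2) * r / (R - r)) * (1 + |T|)))
      = Real.exp (-(2 * (1 + |T|))) *
        Real.exp (-(2 * ((5 / 2 * K + 2) * (1 + |T|)) * r / (R - r))) := by
        rw [← Real.exp_add]; congr 1; field_simp; ring
    _ ≤ _ := by gcongr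

lemma sfb_beta_bound {h : ℝ} (h0 : 0 < h) :
    ∃ K : ℝ, 0 ≤ K ∧ ∀ s : ℂ, 2 ≤ s.re →
      ‖Complex.betaIntegral (s / 2) ((h / 2 : ℝ) : ℂ)‖ ≤ K := by
  have hconv : ∀ u : ℂ, 0 < u.re → IntervalIntegrable (fun x : ℝ =>
      (x : ℂ) ^ (u - 1) * (1 - (x : ℂ)) ^ (((h / 2 : ℝ) : ℂ) - 1)) volume 0 1 := fun u hu =>
    Complex.betaIntegral_convergent hu (by simpa using h0)
  refine ⟨∫ x in (0 : ℝ)..1, ‖(x : ℂ) ^ ((1 : ℂ) - 1) * (1 - (x : ℂ)) ^ (((h / 2 : ℝ) : ℂ) - 1)‖,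
    intervalIntegral.integral_nonneg zero_le_one fun _ _ => norm_nonneg _, fun s hs => ?_⟩
  unfold Complex.betaIntegral
  refine (intervalIntegral.norm_integral_le_integral_norm zero_le_one).trans ?_
  have hs2 : (s / 2).re = s.re / 2 := by simp
  refine intervalIntegral.integral_mono_on_of_le_Ioo zero_le_one
    (hconv _ (by rw [hs2]; linarith)).norm (hconv 1 (by simp)).norm ?_
  intro x hx
  rw [norm_mul, norm_mul]
  gcongr
  rw [Complex.norm_cpow_eq_rpow_re_of_pos hx.1, sub_self, Complex.cpow_zero, norm_one]
  apply Real.rpow_le_one hx.1.le hx.2.le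
  rw [sub_re, hs2, one_re]; linarith

lemma sfb_norm_add_le {s : ℂ} {h : ℝ} (hs : 0 ≤ s.re) (h0 : 0 ≤ h) : ‖s‖ ≤ ‖s + h‖ := by
  rw [← sq_le_sq₀ (norm_nonneg _) (norm_nonneg _), Complex.sq_norm, Complex.sq_norm,
    Complex.normSq_apply, Complex.normSq_apply]
  simp
  nlinarith

lemma sfbXi_right {h : ℝ} (h0 : 0 < h) :
    ∃ K : ℝ, 0 ≤ K ∧ ∀ s : ℂ, 2 ≤ s.re → ‖sfbXi s‖ ≤ K * ‖sfbXi (s + h)‖ := by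
  obtain ⟨B, hB0, hB⟩ := sfb_beta_bound h0
  set g := ‖Complex.Gamma ((h / 2 : ℝ) : ℂ)‖ with hg
  have hg0 : 0 < g := norm_pos_iff.2 (Complex.Gamma_ne_zero_of_re_pos (by simpa using h0))
  refine ⟨π ^ (h / 2) * (B / g) * 5, by positivity, fun s hs => ?_⟩
  have hne : ∀ w : ℂ, 2 ≤ w.re → w ≠ 1 := by rintro w hw rfl; norm_num at hw
  have hsh : 2 ≤ (s + h).re := by simp; linarith
  rw [sfbXi_eq (by linarith) (hne s hs), sfbXi_eq (by linarith) (hne _ hsh), Gammaℝ, Gammaℝ]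
  simp only [norm_mul]
  have b1 : ‖s‖ ≤ ‖s + h‖ := sfb_norm_add_le (by linarith) h0.le
  have b2 : ‖s - 1‖ ≤ ‖s + h - 1‖ := by
    have := sfb_norm_add_le (s := s - 1) (h := h) (by simp; linarith) h0.le
    convert this using 2; ring
  have b3 : ‖(π : ℂ) ^ (-s / 2)‖ = π ^ (h / 2) * ‖(π : ℂ) ^ (-(s + h) / 2)‖ := by
    rw [Complex.norm_cpow_eq_rpow_re_of_pos pi_pos, Complex.norm_cpow_eq_rpow_re_of_pos pi_pos,
      ← Real.rpow_add pi_pos]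
    congr 1
    simp; ring
  have b4 : ‖Complex.Gamma (s / 2)‖ ≤ B / g * ‖Complex.Gamma ((s + h) / 2)‖ := by
    have e := Complex.Gamma_mul_Gamma_eq_betaIntegral (s := s / 2) (t := ((h / 2 : ℝ) : ℂ))
      (by simp; linarith) (by simpa using h0)
    have e2 : s / 2 + ((h / 2 : ℝ) : ℂ) = (s + h) / 2 := by push_cast; ring
    rw [e2] at e
    have e3 := congrArg norm e
    rw [norm_mul, norm_mul] at e3
    rw [div_mul_eq_mul_div, le_div_iff₀ hg0, e3, mul_comm B]
    gcongr
    exact hB s hs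
  have b5 : ‖riemannZeta s‖ ≤ 5 * ‖riemannZeta (s + h)‖ := by
    have u := sfb_zeta_sub_one hs
    have v := sfb_zeta_sub_one hsh
    have u' := norm_sub_norm_le (riemannZeta s) 1
    have v' := norm_sub_norm_le (1 : ℂ) (1 - riemannZeta (s + h))
    rw [norm_sub_rev 1 (riemannZeta _)] at v'
    simp at u' v'
    linarith
  rw [b3]
  calc ‖s‖ * ‖s - 1‖ * (π ^ (h / 2) * ‖(π : ℂ) ^ (-(s + h) / 2)‖ * ‖Complex.Gamma (s / 2)‖ *
        ‖riemannZeta s‖)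
      ≤ ‖s + h‖ * ‖s + h - 1‖ * (π ^ (h / 2) * ‖(π : ℂ) ^ (-(s + h) / 2)‖ *
        (B / g * ‖Complex.Gamma ((s + h) / 2)‖) * (5 * ‖riemannZeta (s + h)‖)) := by
        gcongr
    _ = _ := by ring

lemma sfbXi_le
    (hRH : ∀ ρ : ℂ, riemannZeta ρ = 0 → 0 < ρ.re → ρ.re < 1 → ρ.re = 1 / 2)
    {h : ℝ} (h0 : 0 < h) (h1 : h ≤ 1 / 2) {s : ℂ} (hs : 1 / 2 - h / 2 ≤ s.re) :
    ‖sfbXi s‖ ≤ ‖sfbXi (s + h)‖ := by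
  obtain ⟨K1, hK1, hinv⟩ := sfbXi_inv_bound hRH h0 h1
  obtain ⟨K2, hK2, hup⟩ := sfbXi_upper
  obtain ⟨K3, hK3, hright⟩ := sfbXi_right h0
  set a : ℂ := ((1 / 2 - h / 2 : ℝ) : ℂ) with ha
  set f : ℂ → ℂ := fun z => sfbXi (z + a) / sfbXi (z + a + h) with hf
  have hare : a.re = 1 / 2 - h / 2 := by simp only [ha, ofReal_re]
  have haim : a.im = 0 := by simp only [ha, ofReal_im]
  have hre : ∀ z : ℂ, (z + a + h).re = z.re + (1 / 2 + h / 2) := by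
    intro z; simp only [add_re, hare, ofReal_re]; ring
  have hne : ∀ z : ℂ, 0 ≤ z.re → sfbXi (z + a + h) ≠ 0 := by
    intro z hz
    apply sfbXi_ne_zero hRH
    rw [hre]; linarith
  have hR : ∀ z : ℂ, 2 ≤ (z + a).re → ‖f z‖ ≤ K3 := by
    intro z hz
    rw [hf]
    simp only [norm_div]
    apply div_le_of_le_mul₀ (norm_nonneg _) hK3
    exact hright _ hz
  have hfz : ‖f (s - a)‖ ≤ 1 := by
    apply PhragmenLindelof.right_half_plane_of_bounded_on_real
    · apply DifferentiableOn.diffContOnCl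
      rw [Complex.closure_setOfPred_lt_re]
      intro z hz
      have hz : 0 ≤ z.re := hz
      have d1 : Differentiable ℂ (fun z => sfbXi (z + a)) :=
        sfbXi_differentiable.comp (by fun_prop)
      have d2 : Differentiable ℂ (fun z => sfbXi (z + a + h)) :=
        sfbXi_differentiable.comp (by fun_prop)
      exact ((d1 z).div (d2 z) (hne z hz)).differentiableWithinAt
    · refine ⟨1, by norm_num, 2 * (K1 + K2), ?_⟩
      apply Asymptotics.IsBigO.of_bound (K3 + 1)
      have hbig : ∀ᶠ z : ℂ in Bornology.cobounded ℂ ⊓ 𝓟 {z | 0 < z.re}, 3 < ‖z‖ :=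
        (tendsto_norm_cobounded_atTop.eventually_gt_atTop 3).filter_mono inf_le_left
      have hpos : ∀ᶠ z : ℂ in Bornology.cobounded ℂ ⊓ 𝓟 {z | 0 < z.re}, 0 < z.re :=
        (eventually_principal.2 fun z hz => hz).filter_mono inf_le_right
      filter_upwards [hbig, hpos] with z hz hz0
      rw [Real.rpow_one, Real.norm_eq_abs, abs_of_pos (Real.exp_pos _)]
      have hE : 1 ≤ Real.exp (2 * (K1 + K2) * ‖z‖) := Real.one_le_exp (by positivity)
      rcases le_or_gt 2 (z + a).re with h2 | h2
      · have := hR z h2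
        nlinarith
      · have him : (z + a).im = z.im := by simp [haim]
        have him' : (z + a + h).im = z.im := by simp [haim]
        have hre1 : (z + a).re = z.re + (1 / 2 - h / 2) := by simp [hare]
        have hT : 1 ≤ |z.im| := by
          have := Complex.norm_le_abs_re_add_abs_im z
          rw [abs_of_pos hz0] at this
          linarith
        have u1 := hup (z + a) (by linarith) (by linarith)
        have u2 := hinv (z + a + h) (by rw [hre]; linarith) (by rw [hre]; linarith)
          (by rw [him']; exact hT)
        rw [him] at u1
        rw [him'] at u2
        have hzi := Complex.abs_im_le_norm z
        calc ‖f z‖ = ‖sfbXi (z + a)‖ / ‖sfbXi (z + a + h)‖ := by rw [hf]; simp only [norm_div]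
          _ ≤ Real.exp (K2 * (1 + |z.im|)) / Real.exp (-(K1 * (1 + |z.im|))) := by gcongr
          _ = Real.exp ((K1 + K2) * (1 + |z.im|)) := by
              rw [← Real.exp_sub]; congr 1; ring
          _ ≤ Real.exp (2 * (K1 + K2) * ‖z‖) := by
              apply Real.exp_le_exp.2
              nlinarith
          _ ≤ _ := by nlinarith
    · refine isBoundedUnder_of_eventually_le (a := K3) ?_
      filter_upwards [eventually_ge_atTop (2 : ℝ)] with x hx
      apply hR
      rw [add_re, hare, ofReal_re]; linarith
    · intro x
      have e : x * I + a + h = 1 - starRingEnd ℂ (x * I + a) := by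
        apply Complex.ext
        · simp [hare]; ring
        · simp [haim]
      rw [hf]
      simp only [norm_div]
      rw [e, sfbXi_one_sub, sfbXi_conj, Complex.norm_conj]
      · exact div_self_le_one _
      · simp [hare]; linarith
    · rw [sub_re, hare]; linarith
  have hn := hne (s - a) (by rw [sub_re, hare]; linarith)
  rw [hf] at hfz
  simp only [norm_div, sub_add_cancel] at hfz hn
  exact (div_le_one (norm_pos_iff.2 hn)).1 hfz

lemma sfbXi_logDeriv
    (hRH : ∀ ρ : ℂ, riemannZeta ρ = 0 → 0 < ρ.re → ρ.re < 1 → ρ.re = 1 / 2)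
    {x y : ℝ} (hx : 1 / 2 < x) :
    0 ≤ (deriv sfbXi (x + y * I) / sfbXi (x + y * I)).re := by
  have hne : ∀ u : ℝ, x ≤ u → sfbXi (u + y * I) ≠ 0 := fun u hu =>
    sfbXi_ne_zero hRH (by simp; linarith)
  have h := sfb_hasDerivAt_log_norm (sfbXi_differentiable (x + y * I)).hasDerivAt (hne x le_rfl)
  rw [hasDerivAt_iff_tendsto_slope] at h
  have h' := h.mono_left (nhdsWithin_mono x (show Ioi x ⊆ {x}ᶜ from fun u hu => ne_of_gt hu))
  refine ge_of_tendsto h' ?_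
  filter_upwards [Ioo_mem_nhdsGT (show x < x + 1 / 2 by linarith)] with u hu
  rw [slope_def_field]
  apply div_nonneg _ (by linarith [hu.1])
  rw [sub_nonneg]
  apply Real.log_le_log (norm_pos_iff.2 (hne x le_rfl))
  have := sfbXi_le hRH (h := u - x) (by linarith [hu.1]) (by linarith [hu.2])
    (s := x + y * I) (by simp; linarith [hu.1])
  convert this using 3
  push_cast; ring

lemma sfb_zeta_right : ∃ K : ℝ, ∀ s : ℂ, 2 ≤ s.re →
    -(deriv riemannZeta s / riemannZeta s).re ≤ K := by
  have hs2 : LSeriesSummable (fun n => (ArithmeticFunction.vonMangoldt n : ℂ)) (2 : ℂ) :=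
    ArithmeticFunction.LSeriesSummable_vonMangoldt (by norm_num)
  refine ⟨∑' n, ‖LSeries.term (fun n => (ArithmeticFunction.vonMangoldt n : ℂ)) 2 n‖,
    fun s hs => ?_⟩
  have h := ArithmeticFunction.LSeries_vonMangoldt_eq_deriv_riemannZeta_div (s := s) (by linarith)
  have e : -(deriv riemannZeta s / riemannZeta s).re =
      (LSeries (fun n => (ArithmeticFunction.vonMangoldt n : ℂ)) s).re := by
    rw [h, neg_div, neg_re]
  rw [e]
  refine (Complex.re_le_norm _).trans ?_
  unfold LSeries
  refine tsum_of_norm_bounded hs2.norm.hasSum fun n => ?_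
  exact LSeries.norm_term_le_of_re_le_re _ (by simpa using hs) n

lemma sfb_zeta_eq {s : ℂ} (hs : 0 < s.re) (him : s.im ≠ 0) (hz : riemannZeta s ≠ 0) :
    deriv sfbXi s / sfbXi s = 1 / s + 1 / (s - 1) - (Real.log π : ℂ) / 2
      + 1 / 2 * (deriv Complex.Gamma (s / 2) / Complex.Gamma (s / 2))
      + deriv riemannZeta s / riemannZeta s := by
  have h0 : s ≠ 0 := by rintro rfl; simp at hs
  have h1 : s ≠ 1 := by rintro rfl; simp at him
  have h1' : s - 1 ≠ 0 := sub_ne_zero.2 h1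
  have hG : Complex.Gamma (s / 2) ≠ 0 := Complex.Gamma_ne_zero_of_re_pos (by simpa using hs)
  have hpi : (π : ℂ) ≠ 0 := by exact_mod_cast pi_ne_zero
  have hP : (π : ℂ) ^ (-s / 2) ≠ 0 := by simp [Complex.cpow_eq_zero_iff, hpi]
  have hev : sfbXi =ᶠ[𝓝 s] fun w => w * (w - 1) *
      ((π : ℂ) ^ (-w / 2) * Complex.Gamma (w / 2) * riemannZeta w) := by
    have o1 : ∀ᶠ w in 𝓝 s, 0 < w.re :=
      Complex.continuous_re.continuousAt.eventually (lt_mem_nhds hs)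
    have o2 : ∀ᶠ w in 𝓝 s, w ≠ 1 := eventually_ne_nhds h1
    filter_upwards [o1, o2] with w hw1 hw2
    rw [sfbXi_eq hw1 hw2, Gammaℝ]
  have dG : HasDerivAt (fun w : ℂ => Complex.Gamma (w / 2))
      (deriv Complex.Gamma (s / 2) * (1 / 2)) s := by
    have : DifferentiableAt ℂ Complex.Gamma (s / 2) := by
      apply Complex.differentiableAt_Gamma
      intro m h
      have := congrArg Complex.im h
      simp at this
      exact him this
    exact HasDerivAt.comp s this.hasDerivAt ((hasDerivAt_id s).div_const 2)
  have dP : HasDerivAt (fun w : ℂ => (π : ℂ) ^ (-w / 2))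
      ((π : ℂ) ^ (-s / 2) * Complex.log π * (-1 / 2)) s :=
    (((hasDerivAt_id s).neg).div_const 2).const_cpow (Or.inl hpi)
  have dZ := (differentiableAt_riemannZeta h1).hasDerivAt
  have d := (((hasDerivAt_id s).mul ((hasDerivAt_id s).sub_const 1)).mul
    ((dP.mul dG).mul dZ)).congr_of_eventuallyEq hev
  rw [d.deriv, hev.self_of_nhds, Complex.ofReal_log pi_pos.le]
  simp only [Pi.mul_apply, id]
  field_simp
  ring

theorem rh_implies_spectral_flow_bound
    (hRH : ∀ ρ : ℂ, riemannZeta ρ = 0 → 0 < ρ.re → ρ.re < 1 → ρ.re = 1 / 2) :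
    ∃ C > (0 : ℝ), ∃ T₀ > (0 : ℝ), ∀ σ t : ℝ, 1 / 2 < σ → T₀ < t →
      -(deriv riemannZeta (σ + t * Complex.I) / riemannZeta (σ + t * Complex.I)).re ≤
        (1 / 2) * Real.log (t / (2 * Real.pi)) + C / t ^ 2 := by
  obtain ⟨K, hK⟩ := sfb_zeta_right
  refine ⟨23, by norm_num, max 4 (2 * π * Real.exp (2 * K)), by positivity, ?_⟩
  intro σ t hσ ht
  have ht4 : 4 < t := lt_of_le_of_lt (le_max_left _ _) ht
  have htK : 2 * π * Real.exp (2 * K) < t := lt_of_le_of_lt (le_max_right _ _) ht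
  have hpi := pi_pos
  rcases le_or_gt 2 σ with h2 | h2
  · have a := hK (σ + t * I) (by simpa using h2)
    have b : 2 * K ≤ Real.log (t / (2 * π)) := by
      rw [Real.le_log_iff_exp_le (by positivity), le_div_iff₀ (by positivity)]
      linarith
    have c : (0 : ℝ) ≤ 23 / t ^ 2 := by positivity
    linarith
  · set s : ℂ := σ + t * I with hs
    have hre : s.re = σ := by simp [hs]
    have him : s.im = t := by simp [hs]
    have hz : riemannZeta s ≠ 0 := by
      intro hz
      rcases lt_or_ge s.re 1 with h | h
      · have := hRH s hz (by linarith) h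
        linarith
      · exact riemannZeta_ne_zero_of_one_le_re h hz
    have e := sfb_zeta_eq (s := s) (by linarith) (by rw [him]; linarith) hz
    have hXi := sfbXi_logDeriv hRH (y := t) hσ
    rw [← hs, e] at hXi
    have hdg := sfb_digamma (x := σ / 2) (y := t / 2) (by linarith) (by linarith) (by linarith)
    have es : (((σ / 2 : ℝ) : ℂ) + ((t / 2 : ℝ) : ℂ) * I) = s / 2 := by
      rw [hs]; push_cast; ring
    rw [es] at hdg
    have r1 : (1 / s).re ≤ 2 / t ^ 2 := by
      rw [one_div, Complex.inv_re, Complex.normSq_apply, hre, him]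
      apply div_le_div₀ <;> nlinarith
    have r2 : (1 / (s - 1)).re ≤ 1 / t ^ 2 := by
      rw [one_div, Complex.inv_re, Complex.normSq_apply, sub_re, sub_im, hre, him]
      simp only [one_re, one_im, sub_zero]
      apply div_le_div₀ <;> nlinarith
    set D := deriv Complex.Gamma (s / 2) / Complex.Gamma (s / 2) with hD
    set Z := deriv riemannZeta s / riemannZeta s with hZ
    have r3 : (1 / 2 * D).re = 1 / 2 * D.re := by simp
    have r4 : ((Real.log π : ℂ) / 2).re = Real.log π / 2 := by
      rw [← Complex.ofReal_ofNat, ← Complex.ofReal_div, Complex.ofReal_re]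
    rw [add_re, add_re, sub_re, add_re, r3, r4] at hXi
    have l1 : Real.log (t / (2 * π)) = Real.log (t / 2) - Real.log π := by
      rw [← Real.log_div (by positivity) (by positivity), div_div]
    have l2 : 10 / (t / 2) ^ 2 = 40 / t ^ 2 := by field_simp; norm_num
    rw [l2] at hdg
    rw [l1]
    have l3 : (23 : ℝ) / t ^ 2 = 2 / t ^ 2 + 1 / t ^ 2 + 1 / 2 * (40 / t ^ 2) := by ring
    rw [l3]
    linarith
end

section
/- Assume the Riemann Hypothesis. Then for every complex number s with Re s > 1/2 and s ≠ 1, one has the strict inequality −Re(ζ'(s)/ζ(s)) < Re(1/(s−1)) − (1/2)·log π + (1/2)·Re(Γ'(s/2+1)/Γ(s/2+1)), where Γ is the complex Gamma function and Γ' its derivative. -/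
open Complex Real


namespace RHB
open Set Filter Topology MeasureTheory Asymptotics

noncomputable def xi (s : ℂ) : ℂ := (s * (s - 1) * completedRiemannZeta₀ s + 1) / 2

noncomputable def ZZ (s : ℂ) : ℂ := xi s * (π : ℂ) ^ (s / 2) * (Complex.Gamma (s / 2 + 1))⁻¹

noncomputable def II (s : ℂ) : ℂ :=
  ∫ t in Ioi (1 : ℝ), ((Int.fract t : ℝ) : ℂ) * (t : ℂ) ^ (-(s + 1))

lemma xi_diff : Differentiable ℂ xi := by
  have := differentiable_completedZeta₀
  unfold xi
  fun_prop

lemma pi_ne : (π : ℂ) ≠ 0 := by exact_mod_cast Real.pi_ne_zero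

lemma ZZ_diff : Differentiable ℂ ZZ := by
  have h1 := xi_diff
  have h2 : Differentiable ℂ fun s : ℂ => (Complex.Gamma (s / 2 + 1))⁻¹ :=
    Complex.differentiable_one_div_Gamma.comp (g := fun s => (Complex.Gamma s)⁻¹)
      (f := fun s : ℂ => s / 2 + 1) (by fun_prop)
  have h3 : Differentiable ℂ fun s : ℂ => (π : ℂ) ^ (s / 2) := by
    intro s
    exact DifferentiableAt.const_cpow (by fun_prop) (Or.inl pi_ne)
  exact (h1.mul h3).mul h2

lemma xi_one_sub (s : ℂ) : xi (1 - s) = xi s := by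
  unfold xi
  rw [completedRiemannZeta₀_one_sub]; ring

lemma Gam_ne {s : ℂ} (hs : 0 < s.re) : Complex.Gamma (s / 2 + 1) ≠ 0 := by
  apply Complex.Gamma_ne_zero_of_re_pos
  simp; positivity

lemma xi_eq_ZZ {s : ℂ} (hs : 0 < s.re) :
    xi s = (π : ℂ) ^ (-s / 2) * Complex.Gamma (s / 2 + 1) * ZZ s := by
  unfold ZZ
  have h := Gam_ne hs
  have : (π : ℂ) ^ (-s / 2) * (π : ℂ) ^ (s / 2) = 1 := by
    rw [← Complex.cpow_add _ _ pi_ne]; simp [neg_div]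
  calc xi s = xi s * ((π : ℂ) ^ (-s / 2) * (π : ℂ) ^ (s / 2)) *
        (Complex.Gamma (s / 2 + 1) * (Complex.Gamma (s / 2 + 1))⁻¹) := by
        rw [this, mul_inv_cancel₀ h]; ring
    _ = _ := by ring

lemma ZZ_eq {s : ℂ} (hs : 0 < s.re) (h1 : s ≠ 1) : ZZ s = (s - 1) * riemannZeta s := by
  unfold ZZ xi
  rw [riemannZeta_eq_mul_completedRiemannZeta₀]
  have h := Gam_ne hs
  have h2 : 1 - s ≠ 0 := sub_ne_zero.2 h1.symm
  have : (π : ℂ) ^ (-s / 2) = ((π : ℂ) ^ (s / 2))⁻¹ := by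
    rw [← Complex.cpow_neg, neg_div]
  have h4 : (π : ℂ) ^ (s / 2) ≠ 0 := by simp [Complex.cpow_eq_zero_iff]
  rw [this]
  field_simp
  ring

lemma ZZ_one : ZZ 1 = 1 := by
  unfold ZZ xi
  have : Complex.Gamma (1 / 2 + 1) = (1 / 2) * (π : ℂ) ^ (1 / 2 : ℂ) := by
    rw [Complex.Gamma_add_one _ (by norm_num), Complex.Gamma_one_half_eq]
  rw [this]
  have h4 : (π : ℂ) ^ (1 / 2 : ℂ) ≠ 0 := by simp [Complex.cpow_eq_zero_iff]
  field_simp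
  simp

lemma II_conj (s : ℂ) : II ((starRingEnd ℂ) s) = (starRingEnd ℂ) (II s) := by
  unfold II
  rw [← integral_conj]
  apply setIntegral_congr_fun measurableSet_Ioi
  intro t ht
  have ht0 : (0 : ℝ) < t := lt_trans one_pos ht
  simp only [map_mul, Complex.conj_ofReal]
  congr 1
  have := Complex.cpow_conj (t : ℂ) (-(s + 1)) (by rw [Complex.arg_ofReal_of_nonneg ht0.le]; exact Real.pi_ne_zero.symm)
  simpa using this

lemma II_norm {s : ℂ} (hs : 1 / 4 ≤ s.re) : ‖II s‖ ≤ 4 := by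
  unfold II
  have hi : IntegrableOn (fun t : ℝ => t ^ (-(s.re + 1))) (Ioi 1) :=
    integrableOn_Ioi_rpow_of_lt (by linarith) one_pos
  calc _ ≤ ∫ t in Ioi (1 : ℝ), t ^ (-(s.re + 1)) := by
        apply norm_integral_le_of_norm_le hi
        filter_upwards [ae_restrict_mem measurableSet_Ioi] with t ht
        have ht0 : (0 : ℝ) < t := lt_trans one_pos ht
        rw [norm_mul, Complex.norm_cpow_eq_rpow_re_of_pos ht0, Complex.norm_real, Real.norm_eq_abs,
          abs_of_nonneg (Int.fract_nonneg t)]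
        simp only [neg_re, add_re, one_re]
        have := (Int.fract_lt_one t).le
        have h2 : 0 ≤ t ^ (-(s.re + 1)) := by positivity
        nlinarith
    _ = 1 / s.re := by
        rw [integral_Ioi_rpow_of_lt (by linarith) one_pos]
        simp
    _ ≤ 4 := by
        rw [div_le_iff₀ (by linarith)]; linarith

lemma II_eq_mellin (s : ℂ) :
    II s = mellin ((Ioi (1 : ℝ)).indicator fun t => ((Int.fract t : ℝ) : ℂ)) (-s) := by
  unfold II mellin
  rw [← integral_indicator measurableSet_Ioi, ← integral_indicator measurableSet_Ioi]
  congr 1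
  ext t
  by_cases h : 1 < t
  · have h0 : 0 < t := by linarith
    simp [indicator, h, h0, mul_comm]
    left; congr 1; ring
  · simp [indicator, h]

lemma II_diff {s : ℂ} (hs : 0 < s.re) : DifferentiableAt ℂ II s := by
  have : II = (mellin ((Ioi (1 : ℝ)).indicator fun t => ((Int.fract t : ℝ) : ℂ))) ∘ (fun s => -s) := by
    ext s; exact II_eq_mellin s
  rw [this]
  have hb : ∀ t : ℝ, ‖(Ioi (1 : ℝ)).indicator (fun t => ((Int.fract t : ℝ) : ℂ)) t‖ ≤ 1 := by
    intro t
    refine (norm_indicator_le_norm_self _ _).trans ?_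
    rw [Complex.norm_real, Real.norm_eq_abs, abs_of_nonneg (Int.fract_nonneg t)]
    exact (Int.fract_lt_one t).le
  have hm : Measurable ((Ioi (1 : ℝ)).indicator (fun t => ((Int.fract t : ℝ) : ℂ))) := by
    apply Measurable.indicator _ measurableSet_Ioi
    exact Complex.measurable_ofReal.comp measurable_fract
  refine DifferentiableAt.comp s ?_ (by fun_prop)
  refine mellin_differentiableAt_of_isBigO_rpow (a := 0) (b := -s.re - 1) ?_ ?_ ?_ ?_ ?_
  · apply LocallyIntegrable.locallyIntegrableOn
    exact (locallyIntegrable_const (1 : ℝ)).mono hm.aestronglyMeasurable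
      (Eventually.of_forall fun t => by simpa using hb t)
  · apply IsBigO.of_bound 1
    filter_upwards with t
    simpa using hb t
  · simpa using hs
  · apply IsBigO.of_bound 1
    filter_upwards [Ioo_mem_nhdsGT (one_pos : (0 : ℝ) < 1)] with t ht
    have : ¬ (1 < t) := not_lt.2 ht.2.le
    simp [indicator, this]
  · simp

lemma zeta_eq_II {s : ℂ} (hs : 1 < s.re) : riemannZeta s = s / (s - 1) - s * II s := by
  have hs1 : s - 1 ≠ 0 := by
    intro h; have := congrArg re h; simp at this; linarith
  rw [← LSeries_one_eq_riemannZeta hs]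
  rw [LSeries_eq_mul_integral' 1 zero_le_one hs]
  swap
  · simp only [Pi.one_apply, norm_one, Finset.sum_const, Nat.card_Icc, add_tsub_cancel_right,
      nsmul_eq_mul, mul_one, Real.rpow_one]
    exact isBigO_refl _ _
  have h1 : ∫ t in Ioi (1 : ℝ), (t : ℂ) * (t : ℂ) ^ (-(s + 1)) = 1 / (s - 1) := by
    have : ∫ t in Ioi (1 : ℝ), (t : ℂ) * (t : ℂ) ^ (-(s + 1)) = ∫ t in Ioi (1 : ℝ), (t : ℂ) ^ (-s) := by
      apply setIntegral_congr_fun measurableSet_Ioi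
      intro t ht
      have ht0 : (t : ℂ) ≠ 0 := by exact_mod_cast (lt_trans one_pos ht).ne'
      simp only
      rw [show -s = 1 + -(s + 1) by ring, Complex.cpow_add _ _ ht0, Complex.cpow_one]
    rw [this, integral_Ioi_cpow_of_lt (by simpa using hs) one_pos]
    rw [Complex.ofReal_one, Complex.one_cpow, show -s + 1 = -(s - 1) by ring]
    field_simp
  have hi1 : IntegrableOn (fun t : ℝ => (t : ℂ) * (t : ℂ) ^ (-(s + 1))) (Ioi 1) := by
    have := integrableOn_Ioi_cpow_of_lt (a := -s) (by simpa using hs) one_pos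
    refine this.congr_fun ?_ measurableSet_Ioi
    intro t ht
    have ht0 : (t : ℂ) ≠ 0 := by exact_mod_cast (lt_trans one_pos ht).ne'
    simp only
    rw [show -s = 1 + -(s + 1) by ring, Complex.cpow_add _ _ ht0, Complex.cpow_one]
  have hi2 : IntegrableOn (fun t : ℝ => ((Int.fract t : ℝ) : ℂ) * (t : ℂ) ^ (-(s + 1))) (Ioi 1) := by
    have := integrableOn_Ioi_cpow_of_lt (a := -(s + 1)) (by simp; linarith) one_pos
    refine Integrable.bdd_mul (c := 1) this ?_ ?_
    · exact (Complex.measurable_ofReal.comp measurable_fract).aestronglyMeasurable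
    · filter_upwards with t
      rw [Complex.norm_real, Real.norm_eq_abs, abs_of_nonneg (Int.fract_nonneg t)]
      exact (Int.fract_lt_one t).le
  have : ∫ t in Ioi (1 : ℝ), (∑ k ∈ Finset.Icc 1 ⌊t⌋₊, (1 : ℕ → ℂ) k) * (t : ℂ) ^ (-(s + 1)) =
      1 / (s - 1) - II s := by
    rw [← h1, II, ← integral_sub hi1 hi2]
    apply setIntegral_congr_fun measurableSet_Ioi
    intro t ht
    have ht0 : (0 : ℝ) ≤ t := (lt_trans one_pos ht).le
    simp only [Pi.one_apply, Finset.sum_const, Nat.card_Icc, add_tsub_cancel_right, nsmul_eq_mul,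
      mul_one]
    rw [← sub_mul]
    congr 1
    rw [Int.fract, ← natCast_floor_eq_intCast_floor ht0]
    push_cast; ring
  rw [this]; field_simp

lemma ZZ_eq_II {s : ℂ} (hs : 0 < s.re) : ZZ s = s - s * (s - 1) * II s := by
  have hU : IsOpen {s : ℂ | 0 < s.re} := isOpen_lt continuous_const Complex.continuous_re
  have hc : IsPreconnected {s : ℂ | 0 < s.re} := (convex_halfSpace_re_gt 0).isPreconnected
  have hf : AnalyticOnNhd ℂ ZZ {s : ℂ | 0 < s.re} := ZZ_diff.differentiableOn.analyticOnNhd hU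
  have hg : AnalyticOnNhd ℂ (fun s => s - s * (s - 1) * II s) {s : ℂ | 0 < s.re} := by
    refine DifferentiableOn.analyticOnNhd (fun z hz => ?_) hU
    have := II_diff hz
    exact DifferentiableAt.differentiableWithinAt (by fun_prop)
  refine hf.eqOn_of_preconnected_of_eventuallyEq hg hc (z₀ := 2) (by simp) ?_ hs
  have : {s : ℂ | 1 < s.re} ∈ 𝓝 (2 : ℂ) :=
    (isOpen_lt continuous_const Complex.continuous_re).mem_nhds (by simp)
  filter_upwards [this] with z hz
  have hz : 1 < z.re := hz
  have h1 : z ≠ 1 := by rintro rfl; simp at hz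
  have h2 := sub_ne_zero.2 h1
  rw [ZZ_eq (by linarith) h1, zeta_eq_II hz]
  field_simp

lemma ZZ_upper {s : ℂ} (hs : 1 / 4 ≤ s.re) : ‖ZZ s‖ ≤ 5 * (‖s‖ + 1) ^ 2 := by
  rw [ZZ_eq_II (by linarith)]
  have h1 := II_norm hs
  have h2 : ‖s - 1‖ ≤ ‖s‖ + 1 := by simpa using norm_sub_le s 1
  have h3 := norm_nonneg s
  calc _ ≤ ‖s‖ + ‖s‖ * ‖s - 1‖ * ‖II s‖ := by
        simpa using norm_sub_le s (s * (s - 1) * II s)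
    _ ≤ ‖s‖ + ‖s‖ * (‖s‖ + 1) * 4 := by gcongr
    _ ≤ _ := by nlinarith

lemma xi_conj {s : ℂ} (hs : 0 < s.re) : xi ((starRingEnd ℂ) s) = (starRingEnd ℂ) (xi s) := by
  rw [xi_eq_ZZ hs, xi_eq_ZZ (by simpa using hs), ZZ_eq_II hs, ZZ_eq_II (by simpa using hs), II_conj]
  have h1 : Complex.Gamma ((starRingEnd ℂ) s / 2 + 1) = (starRingEnd ℂ) (Complex.Gamma (s / 2 + 1)) := by
    rw [← Complex.Gamma_conj]; simp [map_ofNat]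
  have h2 : (π : ℂ) ^ (-(starRingEnd ℂ) s / 2) = (starRingEnd ℂ) ((π : ℂ) ^ (-s / 2)) := by
    have := Complex.cpow_conj (π : ℂ) (-s / 2) (by rw [Complex.arg_ofReal_of_nonneg Real.pi_pos.le]; exact Real.pi_ne_zero.symm)
    simpa [map_ofNat] using this
  rw [h1, h2]; simp

lemma zeta_sub_one {s : ℂ} (hs : 2 ≤ s.re) : ‖riemannZeta s - 1‖ ≤ 13 / 20 := by
  rw [zeta_eq_tsum_one_div_nat_add_one_cpow (by linarith)]
  have hS : Summable (fun n : ℕ => 1 / ((n : ℝ) + 1) ^ 2) := by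
    have := (summable_nat_add_iff 1).2 (Real.summable_one_div_nat_pow.2 (one_lt_two))
    simpa using this
  have hb : ∀ n : ℕ, ‖1 / ((n : ℂ) + 1) ^ s‖ ≤ 1 / ((n : ℝ) + 1) ^ 2 := by
    intro n
    have h0 : (0 : ℝ) < (n : ℝ) + 1 := by positivity
    have : ((n : ℂ) + 1) = (((n : ℝ) + 1 : ℝ) : ℂ) := by push_cast; rfl
    rw [this, norm_div, norm_one, Complex.norm_cpow_eq_rpow_re_of_pos h0]
    apply one_div_le_one_div_of_le (by positivity)
    rw [← Real.rpow_natCast]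
    exact Real.rpow_le_rpow_of_exponent_le (by linarith [(Nat.cast_nonneg n : (0 : ℝ) ≤ n)]) (by simpa using hs)
  have hS2 : Summable (fun n : ℕ => 1 / ((n : ℂ) + 1) ^ s) := Summable.of_norm_bounded hS hb
  rw [hS2.tsum_eq_zero_add]
  have hpi : ∑' n : ℕ, 1 / ((n : ℝ) + 1) ^ 2 = π ^ 2 / 6 := by
    have := hasSum_zeta_two.tsum_eq
    rw [hasSum_zeta_two.summable.tsum_eq_zero_add] at this
    simpa using this
  rw [hS.tsum_eq_zero_add] at hpi
  have h3 : ‖∑' n : ℕ, 1 / (((n + 1 : ℕ) : ℂ) + 1) ^ s‖ ≤ ∑' n : ℕ, 1 / (((n + 1 : ℕ) : ℝ) + 1) ^ 2 :=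
    tsum_of_norm_bounded ((summable_nat_add_iff 1).2 hS).hasSum (fun n => hb (n + 1))
  simp only [Nat.cast_zero, zero_add, Complex.one_cpow, one_pow, div_one, add_sub_cancel_left] at *
  have := Real.pi_lt_d4
  have := Real.pi_pos
  nlinarith

lemma zeta_lower {s : ℂ} (hs : 2 ≤ s.re) : 7 / 20 ≤ ‖riemannZeta s‖ := by
  have h := zeta_sub_one hs
  have := norm_sub_norm_le 1 (1 - riemannZeta s)
  rw [norm_sub_rev 1 (riemannZeta s)] at this
  simp at this; linarith

lemma zeta_upper {s : ℂ} (hs : 2 ≤ s.re) : ‖riemannZeta s‖ ≤ 33 / 20 := by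
  have h := zeta_sub_one hs
  have := norm_add_le 1 (riemannZeta s - 1)
  simp at this; linarith

lemma beta_bound {z : ℂ} {h : ℝ} (hz : 1 ≤ z.re) (hh : 0 < h) :
    ‖Complex.betaIntegral z h‖ ≤ 1 / h := by
  unfold Complex.betaIntegral
  have hi : IntervalIntegrable (fun x : ℝ => (1 - x) ^ (h - 1)) volume 0 1 := by
    have := (intervalIntegral.intervalIntegrable_rpow' (a := 1) (b := 0) (r := h - 1) (by linarith)).comp_sub_left 1
    simpa using this
  calc _ ≤ ∫ x in (0 : ℝ)..1, (1 - x) ^ (h - 1) := by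
        apply intervalIntegral.norm_integral_le_of_norm_le zero_le_one _ hi
        have : ∀ᵐ x : ℝ ∂volume, x ≠ 1 := by simp [ae_iff]
        filter_upwards [this] with x hx1 hx
        have hx0 : 0 < x := hx.1
        have hx2 : 0 < 1 - x := by have := lt_of_le_of_ne hx.2 hx1; linarith
        have : (1 - (x : ℂ)) = ((1 - x : ℝ) : ℂ) := by push_cast; rfl
        rw [norm_mul, this, Complex.norm_cpow_eq_rpow_re_of_pos hx0, Complex.norm_cpow_eq_rpow_re_of_pos hx2]
        simp only [sub_re, one_re, ofReal_re]
        have h1 : x ^ (z.re - 1) ≤ 1 := Real.rpow_le_one hx0.le hx.2 (by linarith)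
        have h2 : 0 ≤ (1 - x) ^ (h - 1) := by positivity
        nlinarith
    _ = 1 / h := by
        rw [intervalIntegral.integral_comp_sub_left (fun x => x ^ (h - 1)) 1]
        simp only [sub_self, sub_zero]
        rw [integral_rpow (Or.inl (by linarith))]
        simp [Real.zero_rpow hh.ne']

lemma gamma_ratio {z : ℂ} {h : ℝ} (hz : 1 ≤ z.re) (hh : 0 < h) :
    ‖Complex.Gamma z / Complex.Gamma (z + h)‖ ≤ 1 / h / Real.Gamma h := by
  have h1 := Complex.Gamma_mul_Gamma_eq_betaIntegral (s := z) (t := h) (by linarith) (by simpa using hh)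
  have h2 : Complex.Gamma (z + h) ≠ 0 := Complex.Gamma_ne_zero_of_re_pos (by simp; linarith)
  have h3 : 0 < Real.Gamma h := Real.Gamma_pos_of_pos hh
  have h4 : Complex.Gamma z / Complex.Gamma (z + h) = Complex.betaIntegral z h / Real.Gamma h := by
    have : ((Real.Gamma h : ℝ) : ℂ) ≠ 0 := by exact_mod_cast h3.ne'
    rw [Complex.Gamma_ofReal] at h1
    field_simp
    rw [h1]
  rw [h4, norm_div, Complex.norm_real, Real.norm_eq_abs, abs_of_pos h3]
  gcongr
  exact beta_bound hz hh

end RHB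

namespace RHB
open Set Filter Topology MeasureTheory Asymptotics

lemma min_mod {F : ℂ → ℂ} {R M : ℝ} {z : ℂ} (hR : 0 < R) (hM : 0 < M)
    (hF : DifferentiableOn ℂ F (Metric.ball 0 R)) (hF0 : ∀ w ∈ Metric.ball (0 : ℂ) R, F w ≠ 0)
    (h0 : F 0 = 1) (hb : ∀ w ∈ Metric.ball (0 : ℂ) R, ‖F w‖ ≤ Real.exp M)
    (hz : z ∈ Metric.ball (0 : ℂ) R) :
    Real.exp (-(2 * M * ‖z‖ / (R - ‖z‖))) ≤ ‖F z‖ := by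
  have hd : DifferentiableOn ℂ (fun w => deriv F w / F w) (Metric.ball 0 R) :=
    (hF.deriv Metric.isOpen_ball).div hF hF0
  obtain ⟨g, hg⟩ := hd.isExactOn_ball
  set k : ℂ → ℂ := fun w => g w - g 0 with hk
  have hkd : ∀ w ∈ Metric.ball (0 : ℂ) R, HasDerivAt k (deriv F w / F w) w :=
    fun w hw => (hg w hw).sub_const _
  have hexp : ∀ w ∈ Metric.ball (0 : ℂ) R, F w = Complex.exp (k w) := by
    intro w hw
    have hdd : ∀ w ∈ Metric.ball (0 : ℂ) R, HasDerivAt (fun w => F w * Complex.exp (-k w)) 0 w := by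
      intro w hw
      have h1 := (hF.differentiableAt (Metric.isOpen_ball.mem_nhds hw)).hasDerivAt
      have h2 := (hkd w hw).neg.cexp
      have h3 := h1.mul h2
      convert! h3 using 1
      have := hF0 w hw
      simp only [Pi.neg_apply]
      field_simp
      ring
    have := Metric.isOpen_ball.is_const_of_deriv_eq_zero (convex_ball (0 : ℂ) R).isPreconnected
      (fun w hw => (hdd w hw).differentiableAt.differentiableWithinAt)
      (fun w hw => (hdd w hw).deriv) hw (Metric.mem_ball_self hR)
    simp only [h0, hk, sub_self, neg_zero, Complex.exp_zero, mul_one] at this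
    rw [Complex.exp_neg] at this
    have hne := Complex.exp_ne_zero (g w - g 0)
    field_simp at this
    simpa [hk] using this
  have hbc := Complex.borelCaratheodory_zero (f := k) hM
    (fun w hw => (hkd w hw).differentiableAt.differentiableWithinAt) (by
      intro w hw
      have := hb w hw
      rw [hexp w hw, Complex.norm_exp, Real.exp_le_exp] at this
      exact this) hR hz (by simp [hk])
  rw [hexp z hz, Complex.norm_exp, Real.exp_le_exp]
  have := Complex.abs_re_le_norm (k z)
  have := neg_abs_le (k z).re
  linarith

def RH' : Prop := ∀ ρ : ℂ, riemannZeta ρ = 0 → 0 < ρ.re → ρ.re < 1 → ρ.re = 1 / 2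

lemma zeta_ne (hRH : RH') {s : ℂ} (hs : 1 / 2 < s.re) : riemannZeta s ≠ 0 := by
  intro h
  by_cases h1 : 1 ≤ s.re
  · exact riemannZeta_ne_zero_of_one_le_re h1 h
  · have := hRH s h (by linarith) (by linarith)
    linarith

lemma ZZ_ne (hRH : RH') {s : ℂ} (hs : 1 / 2 < s.re) : ZZ s ≠ 0 := by
  by_cases h1 : s = 1
  · rw [h1, ZZ_one]; exact one_ne_zero
  · rw [ZZ_eq (by linarith) h1]
    exact mul_ne_zero (sub_ne_zero.2 h1) (zeta_ne hRH hs)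

lemma xi_ne (hRH : RH') {s : ℂ} (hs : 1 / 2 < s.re) : xi s ≠ 0 := by
  rw [xi_eq_ZZ (by linarith)]
  refine mul_ne_zero (mul_ne_zero ?_ (Gam_ne (by linarith))) (ZZ_ne hRH hs)
  simp [Complex.cpow_eq_zero_iff]

lemma ZZ_lower_two {s : ℂ} (hs : 2 ≤ s.re) : 7 / 20 * (s.re - 1) ≤ ‖ZZ s‖ := by
  have h1 : s ≠ 1 := by rintro rfl; norm_num at hs
  rw [ZZ_eq (by linarith) h1, norm_mul]
  have := zeta_lower hs
  have h2 : s.re - 1 ≤ ‖s - 1‖ := by simpa using Complex.re_le_norm (s - 1)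
  have h3 := norm_nonneg (s - 1)
  nlinarith

lemma ZZ_lower (hRH : RH') {l : ℝ} (hl : 1 / 2 < l) (hl' : l < 3 / 4) :
    ∃ K : ℝ, 0 ≤ K ∧ ∀ s : ℂ, l ≤ s.re → ‖(ZZ s)⁻¹‖ ≤ 3 * Real.exp (K * (‖s‖ + 8)) := by
  refine ⟨2 * (3 / 2) / (l - 1 / 2), by have : 0 < l - 1 / 2 := by linarith
                                        positivity, fun s hs => ?_⟩
  have hl0 : 0 < l - 1 / 2 := by linarith
  rw [norm_inv]
  have hns := norm_nonneg s
  by_cases h2 : 2 ≤ s.re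
  · have h1 := ZZ_lower_two h2
    have h3 : (‖ZZ s‖)⁻¹ ≤ 3 := by
      rw [inv_le_comm₀ (by linarith) (by norm_num)]; linarith
    have h4 : 1 ≤ Real.exp (2 * (3 / 2) / (l - 1 / 2) * (‖s‖ + 8)) := Real.one_le_exp (by positivity)
    linarith
  · push Not at h2
    set c : ℂ := ⟨2, s.im⟩ with hc
    have hcl : 7 / 20 ≤ ‖ZZ c‖ := by
      have := ZZ_lower_two (s := c) le_rfl
      norm_num [hc] at this ⊢; linarith
    have hcs : ‖s - c‖ = 2 - s.re := by
      have : s - c = ((s.re - 2 : ℝ) : ℂ) := by apply Complex.ext <;> simp [hc]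
      rw [this, Complex.norm_real, Real.norm_eq_abs, abs_of_neg (by linarith)]; ring
    have hcn : ‖c‖ ≤ ‖s‖ + 3 / 2 := by
      have := norm_sub_norm_le c s
      rw [norm_sub_rev, hcs] at this; linarith
    have hcz : ZZ c ≠ 0 := by intro h; rw [h] at hcl; norm_num at hcl
    have hre : ∀ w ∈ Metric.ball (0 : ℂ) (3 / 2), 1 / 2 < (c + w).re := by
      intro w hw
      have hw : ‖w‖ < 3 / 2 := by simpa using hw
      have := neg_abs_le w.re
      have := Complex.abs_re_le_norm w
      simp only [add_re, hc]
      linarith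
    have key := min_mod (F := fun w => ZZ (c + w) / ZZ c) (R := 3 / 2) (M := ‖s‖ + 8) (z := s - c)
      (by norm_num) (by positivity)
      (by have := ZZ_diff
          exact Differentiable.differentiableOn (by fun_prop))
      (fun w hw => div_ne_zero (ZZ_ne hRH (hre w hw)) hcz) (by simp [hcz])
      (by
        intro w hw
        have h1 := ZZ_upper (s := c + w) (by linarith [hre w hw])
        have hw : ‖w‖ < 3 / 2 := by simpa using hw
        have h2' := norm_add_le c w
        have h3 : ‖c + w‖ + 1 ≤ ‖s‖ + 4 := by linarith
        rw [norm_div]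
        have e1 := Real.pow_div_factorial_le_exp (‖s‖ + 4) (by positivity) 2
        have e2 : (32 : ℝ) ≤ Real.exp 4 := by
          have : (2.7 : ℝ) ≤ Real.exp 1 := by linarith [Real.exp_one_gt_d9]
          calc (32 : ℝ) ≤ 2.7 ^ 4 := by norm_num
            _ ≤ (Real.exp 1) ^ 4 := by gcongr
            _ = Real.exp 4 := by rw [← Real.exp_nat_mul]; norm_num
        simp only [Nat.factorial] at e1
        norm_num at e1
        calc ‖ZZ (c + w)‖ / ‖ZZ c‖ ≤ (5 * (‖s‖ + 4) ^ 2) / (7 / 20) := by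
              apply div_le_div₀ (by positivity) _ (by norm_num) hcl
              refine h1.trans ?_
              gcongr
          _ ≤ 32 * Real.exp (‖s‖ + 4) := by
              rw [div_le_iff₀ (by norm_num)]; nlinarith
          _ ≤ Real.exp 4 * Real.exp (‖s‖ + 4) := by gcongr
          _ = Real.exp (‖s‖ + 8) := by rw [← Real.exp_add]; ring_nf)
      (by simp [hcs]; linarith)
    simp only [add_sub_cancel, norm_div, hcs] at key
    rw [le_div_iff₀ (by linarith)] at key
    have hk2 : Real.exp (-(2 * (3 / 2) / (l - 1 / 2) * (‖s‖ + 8))) ≤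
        Real.exp (-(2 * (‖s‖ + 8) * (2 - s.re) / (3 / 2 - (2 - s.re)))) := by
      rw [Real.exp_le_exp, neg_le_neg_iff, div_mul_eq_mul_div]
      apply div_le_div₀ (by positivity) _ hl0 (by linarith)
      nlinarith
    rw [Real.exp_neg] at hk2
    set E := Real.exp (2 * (3 / 2) / (l - 1 / 2) * (‖s‖ + 8)) with hE
    have hEp : 0 < E := Real.exp_pos _
    have h5 : E⁻¹ * (1 / 3) ≤ ‖ZZ s‖ := by
      refine le_trans ?_ key
      apply mul_le_mul hk2 (by linarith) (by norm_num) (Real.exp_pos _).le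
    calc (‖ZZ s‖)⁻¹ ≤ (E⁻¹ * (1 / 3))⁻¹ := inv_anti₀ (by positivity) h5
      _ = 3 * E := by field_simp

lemma ratio_bound {l : ℝ} (hl : 1 / 2 < l) (hl' : l < 3 / 4) :
    ∃ C : ℝ, 0 < C ∧ ∀ w : ℂ, 0 ≤ w.re →
      ‖xi (1 - l + w) / xi (l + w)‖ ≤ C * (‖ZZ (1 - l + w)‖ * ‖(ZZ (l + w))⁻¹‖) := by
  have hh : 0 < l - 1 / 2 := by linarith
  have hG : 0 < Real.Gamma (l - 1 / 2) := Real.Gamma_pos_of_pos hh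
  refine ⟨π ^ (l - 1 / 2) * (1 / (l - 1 / 2) / Real.Gamma (l - 1 / 2)), by positivity, fun w hw => ?_⟩
  rw [xi_eq_ZZ (s := 1 - l + w) (by simp; linarith), xi_eq_ZZ (s := l + w) (by simp; linarith)]
  have hg := gamma_ratio (z := (1 - l + w) / 2 + 1) (h := l - 1 / 2) (by simp; linarith) hh
  have e : (1 - (l : ℂ) + w) / 2 + 1 + ((l - 1 / 2 : ℝ) : ℂ) = (l + w) / 2 + 1 := by push_cast; ring
  rw [e] at hg
  rw [mul_div_mul_comm, mul_div_mul_comm, norm_mul, norm_mul]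
  have h1 : ‖(π : ℂ) ^ (-(1 - (l : ℂ) + w) / 2) / (π : ℂ) ^ (-(l + w) / 2)‖ = π ^ (l - 1 / 2) := by
    rw [← Complex.cpow_sub _ _ pi_ne, Complex.norm_cpow_eq_rpow_re_of_pos Real.pi_pos]
    congr 1
    simp; ring
  rw [h1, div_eq_mul_inv (ZZ _) (ZZ _), norm_mul (ZZ _)]
  gcongr

lemma main_ineq (hRH : RH') {l : ℝ} (hl : 1 / 2 < l) (hl' : l < 3 / 4) {w : ℂ} (hw : 0 ≤ w.re) :
    ‖xi (1 - l + w)‖ ≤ ‖xi (l + w)‖ := by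
  obtain ⟨C, hC, hr⟩ := ratio_bound hl hl'
  obtain ⟨K, hK, hlow⟩ := ZZ_lower hRH hl hl'
  have hne : ∀ w : ℂ, 0 ≤ w.re → xi (l + w) ≠ 0 := fun w hw => xi_ne hRH (by simp; linarith)
  have key : ‖(fun w => xi (1 - l + w) / xi (l + w)) w‖ ≤ 1 := by
    refine PhragmenLindelof.right_half_plane_of_bounded_on_real
      (f := fun w => xi (1 - l + w) / xi (l + w)) (z := w) ?_ ?_ ?_ ?_ hw
    · apply DifferentiableOn.diffContOnCl
      rw [Complex.closure_setOfPred_lt_re]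
      intro z hz
      have := xi_diff
      apply DifferentiableAt.differentiableWithinAt
      exact DifferentiableAt.div (by fun_prop) (by fun_prop) (hne z hz)
    · refine ⟨1, by norm_num, K + 1, ?_⟩
      apply IsBigO.of_bound (C * (10 * Real.exp 3 * (3 * Real.exp (K * 9))))
      rw [Filter.eventually_inf_principal]
      refine Eventually.of_forall fun z hz => ?_
      have hz : 0 < z.re := hz
      have hln : ‖(l : ℂ)‖ = l := by rw [Complex.norm_real, Real.norm_eq_abs, abs_of_pos (by linarith)]
      have hln2 : ‖1 - (l : ℂ)‖ = 1 - l := by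
        have : 1 - (l : ℂ) = ((1 - l : ℝ) : ℂ) := by push_cast; rfl
        rw [this, Complex.norm_real, Real.norm_eq_abs, abs_of_pos (by linarith)]
      have n1 : ‖1 - (l : ℂ) + z‖ ≤ ‖z‖ + 1 := by
        have := norm_add_le (1 - (l : ℂ)) z; linarith
      have n2 : ‖(l : ℂ) + z‖ ≤ ‖z‖ + 1 := by
        have := norm_add_le (l : ℂ) z; linarith
      have b1 := ZZ_upper (s := 1 - l + z) (by simp; linarith)
      have b2 := hlow (l + z) (by simp; linarith)
      have hzn := norm_nonneg z
      have b3 : ‖ZZ (1 - l + z)‖ ≤ 10 * Real.exp 3 * Real.exp ‖z‖ := by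
        have e1 := Real.pow_div_factorial_le_exp (‖z‖ + 2) (by positivity) 2
        simp only [Nat.factorial] at e1
        norm_num at e1
        rw [mul_assoc, ← Real.exp_add]
        have e2 : Real.exp (‖z‖ + 2) ≤ Real.exp (3 + ‖z‖) := Real.exp_le_exp.2 (by linarith)
        have e3 : (‖1 - (l : ℂ) + z‖ + 1) ^ 2 ≤ (‖z‖ + 2) ^ 2 := by
          apply pow_le_pow_left₀ (by positivity); linarith
        linarith
      have b4 : ‖(ZZ (l + z))⁻¹‖ ≤ 3 * Real.exp (K * 9) * Real.exp (K * ‖z‖) := by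
        refine b2.trans ?_
        rw [mul_assoc, ← Real.exp_add]
        gcongr
        nlinarith
      refine (hr z hz.le).trans ?_
      rw [Real.norm_eq_abs, abs_of_pos (Real.exp_pos _), Real.rpow_one, mul_assoc]
      refine mul_le_mul_of_nonneg_left ?_ hC.le
      calc _ ≤ (10 * Real.exp 3 * Real.exp ‖z‖) * (3 * Real.exp (K * 9) * Real.exp (K * ‖z‖)) := by
            gcongr
        _ = 10 * Real.exp 3 * (3 * Real.exp (K * 9)) * (Real.exp (K * ‖z‖) * Real.exp ‖z‖) := by ring
        _ = _ := by rw [← Real.exp_add]; ring_nf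
    · refine ⟨C * (33 / 7), ?_⟩
      rw [Filter.eventually_map]
      filter_upwards [eventually_ge_atTop 3] with x hx
      refine (hr x (by simp; linarith)).trans ?_
      apply mul_le_mul_of_nonneg_left _ hC.le
      have b1 := ZZ_lower_two (s := (l : ℂ) + x) (by simp; linarith)
      have b2 : ‖ZZ (1 - l + x)‖ ≤ (x - l) * (33 / 20) := by
        have e : (1 - (l : ℂ) + x) = ((1 - l + x : ℝ) : ℂ) := by push_cast; rfl
        have h2 : 2 ≤ (1 - (l : ℂ) + x).re := by simp; linarith
        have h1 : (1 - (l : ℂ) + x) ≠ 1 := by intro h; rw [h] at h2; norm_num at h2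
        rw [ZZ_eq (by linarith) h1, norm_mul]
        have e2 : (1 - (l : ℂ) + x) - 1 = ((x - l : ℝ) : ℂ) := by push_cast; ring
        rw [e2, Complex.norm_real, Real.norm_eq_abs, abs_of_pos (by linarith)]
        exact mul_le_mul_of_nonneg_left (zeta_upper h2) (by linarith)
      simp only [add_re, ofReal_re] at b1
      rw [norm_inv, ← div_eq_mul_inv, div_le_iff₀ (by linarith)]
      linarith
    · intro x
      have e : xi (1 - l + x * I) = (starRingEnd ℂ) (xi (l + x * I)) := by
        rw [← xi_conj (by simp; linarith), ← xi_one_sub]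
        congr 1
        simp; ring
      rw [e, norm_div, Complex.norm_conj]
      exact div_self_le_one _
  simp only [norm_div] at key
  rwa [div_le_one (norm_pos_iff.2 (hne w hw))] at key

lemma logDeriv_nonneg (hRH : RH') {s : ℂ} (hs : 1 / 2 < s.re) : 0 ≤ (logDeriv xi s).re := by
  have hx := xi_ne hRH hs
  have hd : HasDerivAt (fun x : ℝ => xi (s + x)) (deriv xi s) 0 := by
    have h1 : HasDerivAt xi (deriv xi s) (s + ((0 : ℝ) : ℂ)) := by
      simpa using (xi_diff s).hasDerivAt
    have h2 : HasDerivAt (fun z : ℂ => xi (s + z)) (deriv xi s) ((0 : ℝ) : ℂ) := h1.comp_const_add s _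
    exact h2.comp_ofReal
  have hq := hd.norm_sq
  rw [hasDerivAt_iff_tendsto_slope] at hq
  have hq2 := hq.mono_left (nhdsLT_le_nhdsNE 0)
  have hin : 0 ≤ 2 * inner ℝ (xi (s + (0 : ℝ))) (deriv xi s) := by
    refine ge_of_tendsto hq2 ?_
    have hm : max (-(s.re - 1 / 2)) (-(1 / 4)) < 0 := max_lt (by linarith) (by norm_num)
    filter_upwards [Ioo_mem_nhdsLT hm] with y hy
    have hy1 := (max_lt_iff.1 hy.1).1
    have hy2 := (max_lt_iff.1 hy.1).2
    have hy0 : y < 0 := hy.2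
    have := main_ineq hRH (l := 1 / 2 - y / 2) (by linarith) (by linarith)
      (w := s - ((1 / 2 - y / 2 : ℝ) : ℂ)) (by simp; linarith)
    have e1 : (1 : ℂ) - ((1 / 2 - y / 2 : ℝ) : ℂ) + (s - ((1 / 2 - y / 2 : ℝ) : ℂ)) = s + y := by
      push_cast; ring
    rw [e1, add_sub_cancel] at this
    rw [slope_def_field]
    apply div_nonneg_of_nonpos _ (by linarith)
    simp only [ofReal_zero, add_zero]
    have := pow_le_pow_left₀ (norm_nonneg _) this 2
    linarith
  rw [logDeriv_apply, Complex.div_re]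
  rw [Complex.inner] at hin
  simp only [ofReal_zero, add_zero, mul_re, conj_re, conj_im] at hin
  rw [← add_div]
  apply div_nonneg _ (normSq_nonneg _)
  linarith

lemma xi_two : xi 2 = (π / 6 : ℝ) := by
  rw [xi_eq_ZZ (by simp), ZZ_eq (by simp) (by norm_num), riemannZeta_two]
  have : Complex.Gamma (2 / 2 + 1) = 1 := by
    rw [show (2 : ℂ) / 2 + 1 = (1 : ℕ) + 1 by norm_num, Complex.Gamma_nat_eq_factorial]; simp
  rw [this, show (-2 : ℂ) / 2 = -1 by norm_num, Complex.cpow_neg_one]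
  have := pi_ne
  push_cast
  field_simp
  norm_num

lemma xi_four : xi 4 = (π ^ 2 / 15 : ℝ) := by
  rw [xi_eq_ZZ (by simp), ZZ_eq (by simp) (by norm_num), riemannZeta_four]
  have : Complex.Gamma (4 / 2 + 1) = 2 := by
    rw [show (4 : ℂ) / 2 + 1 = (2 : ℕ) + 1 by norm_num, Complex.Gamma_nat_eq_factorial]; simp
  rw [this, show (-4 : ℂ) / 2 = -(2 : ℕ) by norm_num, Complex.cpow_neg, Complex.cpow_natCast]
  have := pi_ne
  push_cast
  field_simp
  norm_num

lemma logDeriv_pos (hRH : RH') {s : ℂ} (hs : 1 / 2 < s.re) : 0 < (logDeriv xi s).re := by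
  refine lt_of_le_of_ne (logDeriv_nonneg hRH hs) ?_
  intro h0
  set U : Set ℂ := {z : ℂ | 1 / 2 < z.re} with hUdef
  have hU : IsOpen U := isOpen_lt continuous_const Complex.continuous_re
  have hc : IsPreconnected U := (convex_halfSpace_re_gt (1 / 2)).isPreconnected
  have hne : ∀ z ∈ U, xi z ≠ 0 := fun z hz => xi_ne hRH hz
  have hdl : DifferentiableOn ℂ (logDeriv xi) U :=
    (xi_diff.differentiableOn.deriv hU).div xi_diff.differentiableOn hne
  rcases (hdl.analyticOnNhd hU).is_constant_or_isOpen hc with ⟨w, hw⟩ | hopen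
  · have hw0 : w.re = 0 := by rw [← hw s hs, ← h0]
    have hexp : EqOn (logDeriv xi) (logDeriv fun z => Complex.exp (w * z)) U := by
      intro z hz
      rw [hw z hz, logDeriv_apply]
      have : HasDerivAt (fun z => Complex.exp (w * z)) (Complex.exp (w * z) * w) z := by
        simpa using ((hasDerivAt_id z).const_mul w).cexp
      rw [this.deriv]
      field_simp
    obtain ⟨a, ha, hE⟩ := (logDeriv_eqOn_iff xi_diff.differentiableOn
      (Differentiable.differentiableOn (by fun_prop)) hU hc (fun z _ => Complex.exp_ne_zero _) hne).1 hexp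
    have n2 := congrArg norm (hE (show (2 : ℂ) ∈ U by simp [hUdef]; norm_num))
    have n4 := congrArg norm (hE (show (4 : ℂ) ∈ U by simp [hUdef]; norm_num))
    simp only [Pi.smul_apply, smul_eq_mul, norm_mul, Complex.norm_exp] at n2 n4
    rw [xi_two, Complex.norm_real, Real.norm_eq_abs, abs_of_pos (by positivity)] at n2
    rw [xi_four, Complex.norm_real, Real.norm_eq_abs, abs_of_pos (by positivity)] at n4
    simp [hw0] at n2 n4
    rw [← n2] at n4
    have := Real.pi_gt_three
    nlinarith
  · have ho := hopen U subset_rfl hU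
    have hmem : logDeriv xi s ∈ logDeriv xi '' U := mem_image_of_mem _ hs
    obtain ⟨ε, hε, hb⟩ := Metric.isOpen_iff.1 ho _ hmem
    have : logDeriv xi s - ((ε / 2 : ℝ) : ℂ) ∈ Metric.ball (logDeriv xi s) ε := by
      rw [Metric.mem_ball, dist_eq_norm, sub_sub_cancel_left, norm_neg, Complex.norm_real,
        Real.norm_eq_abs, abs_of_pos (by linarith)]
      linarith
    obtain ⟨z, hz, hzz⟩ := hb this
    have h1 := logDeriv_nonneg hRH hz
    rw [hzz, sub_re, ← h0, ofReal_re] at h1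
    linarith

lemma logDeriv_xi (hRH : RH') {s : ℂ} (hs : 1 / 2 < s.re) (h1 : s ≠ 1) :
    logDeriv xi s = 1 / (s - 1) - (1 / 2) * (Real.log π : ℂ) +
      (1 / 2) * (deriv Complex.Gamma (s / 2 + 1) / Complex.Gamma (s / 2 + 1)) +
      deriv riemannZeta s / riemannZeta s := by
  have hev : xi =ᶠ[𝓝 s] fun z => (π : ℂ) ^ (-z / 2) * Complex.Gamma (z / 2 + 1) *
      ((z - 1) * riemannZeta z) := by
    have a1 : {z : ℂ | 1 / 2 < z.re} ∈ 𝓝 s :=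
      (isOpen_lt continuous_const Complex.continuous_re).mem_nhds hs
    filter_upwards [a1, isOpen_ne.mem_nhds h1] with z hz hz1
    have hz : 1 / 2 < z.re := hz
    rw [xi_eq_ZZ (by linarith), ZZ_eq (by linarith) hz1]
  have hG := Gam_ne (s := s) (by linarith)
  have hζ := zeta_ne hRH hs
  have hs1 := sub_ne_zero.2 h1
  have hp : (π : ℂ) ^ (-s / 2) ≠ 0 := by simp [Complex.cpow_eq_zero_iff]
  have dG : HasDerivAt (fun z : ℂ => Complex.Gamma (z / 2 + 1))
      (deriv Complex.Gamma (s / 2 + 1) * (1 / 2)) s := by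
    have : DifferentiableAt ℂ Complex.Gamma (s / 2 + 1) := by
      apply Complex.differentiableAt_Gamma
      intro m hm
      have := congrArg re hm
      simp at this
      have hm0 : (0 : ℝ) ≤ m := Nat.cast_nonneg m
      linarith
    exact HasDerivAt.comp s (h₂ := Complex.Gamma) (h := fun z : ℂ => z / 2 + 1) this.hasDerivAt
      (((hasDerivAt_id s).div_const 2).add_const 1)
  have dp : HasDerivAt (fun z : ℂ => (π : ℂ) ^ (-z / 2))
      ((π : ℂ) ^ (-s / 2) * Complex.log π * (-1 / 2)) s :=
    HasDerivAt.const_cpow ((hasDerivAt_id s).neg.div_const 2) (Or.inl pi_ne)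
  have dz := (differentiableAt_riemannZeta h1).hasDerivAt
  have dd := (dp.mul dG).mul (((hasDerivAt_id s).sub_const 1).mul dz)
  rw [(logDeriv_congr_nhds hev).eq_of_nhds, logDeriv_apply]
  have := dd.deriv
  simp only [Pi.mul_def, id] at this
  erw [this]
  rw [Complex.ofReal_log Real.pi_pos.le]
  clear this dd dz dp dG hev
  generalize deriv Complex.Gamma (s / 2 + 1) = G' at *
  generalize Complex.Gamma (s / 2 + 1) = G at *
  generalize (π : ℂ) ^ (-s / 2) = P at *
  field_simp
  ring

end RHB

/-- Assuming the Riemann Hypothesis, for every `s` with `Re s > 1/2` and `s ≠ 1`,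
`-Re(ζ'(s)/ζ(s)) < Re(1/(s-1)) - (1/2)·log π + (1/2)·Re(Γ'(s/2+1)/Γ(s/2+1))`. -/
theorem rh_implies_strict_bound
    (hRH : ∀ ρ : ℂ, riemannZeta ρ = 0 → 0 < ρ.re → ρ.re < 1 → ρ.re = 1 / 2) :
    ∀ s : ℂ, 1 / 2 < s.re → s ≠ 1 →
      -(deriv riemannZeta s / riemannZeta s).re <
        (1 / (s - 1)).re - (1 / 2) * Real.log Real.pi +
          (1 / 2) * (deriv Complex.Gamma (s / 2 + 1) / Complex.Gamma (s / 2 + 1)).re := by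
  intro s hs h1
  have h := RHB.logDeriv_pos hRH hs
  rw [RHB.logDeriv_xi hRH hs h1] at h
  have e : ∀ z : ℂ, ((1 / 2 : ℂ) * z).re = 1 / 2 * z.re := by
    intro z
    have : (1 / 2 : ℂ) = ((1 / 2 : ℝ) : ℂ) := by push_cast; rfl
    rw [this, Complex.re_ofReal_mul]
  rw [Complex.add_re, Complex.add_re, Complex.sub_re, e, e, Complex.ofReal_re] at h
  linarith
end

section
/- Assume the Riemann Hypothesis. Then for every real number t with ζ(1/2 + it) ≠ 0, one has the exact identity −Re(ζ'(1/2+it)/ζ(1/2+it)) = Re(1/(it − 1/2)) − (1/2)·log π + (1/2)·Re(Γ'(5/4 + it/2)/Γ(5/4 + it/2)), where Γ is the complex Gamma function and Γ' its derivative. -/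
open Complex Real

/-- The completed zeta function, written as a product. -/
noncomputable def xiF (z : ℂ) : ℂ := (Complex.exp (-(Real.log Real.pi : ℂ) * z / 2) *
  Complex.Gamma (z / 2)) * riemannZeta z

lemma xiF_eq {z : ℂ} (hz : 0 < z.re) : xiF z = completedRiemannZeta z := by
  have h0 : z ≠ 0 := by rintro rfl; simp at hz
  have hG := Complex.Gammaℝ_ne_zero_of_re_pos hz
  have h1 : Complex.exp (-(Real.log Real.pi : ℂ) * z / 2) * Complex.Gamma (z / 2)
      = Complex.Gammaℝ z := by
    rw [Complex.Gammaℝ_def, Complex.cpow_def_of_ne_zero (by exact_mod_cast Real.pi_ne_zero),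
      ← Complex.ofReal_log Real.pi_pos.le]
    congr 2; ring
  rw [xiF, h1, riemannZeta_def_of_ne_zero h0]
  field_simp

open ComplexConjugate in
lemma xiF_conj (z : ℂ) : xiF (conj z) = conj (xiF z) := by
  have h : conj z / 2 = conj (z / 2) := by
    rw [map_div₀, Complex.conj_ofNat]
  have h2 : -(Real.log Real.pi : ℂ) * conj z / 2 = conj (-(Real.log Real.pi : ℂ) * z / 2) := by
    rw [map_div₀, map_mul, map_neg, Complex.conj_ofReal, Complex.conj_ofNat]
  rw [xiF, xiF, riemannZeta_conj, h, h2, Complex.Gamma_conj, Complex.exp_conj, map_mul, map_mul]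

open ComplexConjugate in
lemma xiF_logDeriv_re (s : ℂ) (hs : s.re = 1 / 2) : (logDeriv xiF s).re = 0 := by
  have hc : 1 - s = conj s := by
    apply Complex.ext <;> simp [hs]; norm_num
  have hev : xiF =ᶠ[nhds s] fun z => xiF (1 - z) := by
    have ho : IsOpen {z : ℂ | 0 < z.re ∧ z.re < 1} :=
      (isOpen_lt continuous_const Complex.continuous_re).inter
        (isOpen_lt Complex.continuous_re continuous_const)
    filter_upwards [ho.mem_nhds (show s ∈ {z : ℂ | 0 < z.re ∧ z.re < 1} by
      simp only [Set.mem_setOf_eq, hs]; norm_num)] with z hz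
    rw [xiF_eq hz.1, xiF_eq (by simpa using hz.2), completedRiemannZeta_one_sub]
  have hd := hev.deriv_eq
  rw [deriv_comp_const_sub, hc] at hd
  have hcc : conj ∘ xiF ∘ conj = xiF := by
    funext z; simp [xiF_conj]
  have hd2 : deriv xiF (conj s) = conj (deriv xiF s) := by
    conv_lhs => rw [← hcc]
    simp [deriv_conj_conj]
  have hv := hev.eq_of_nhds
  simp only [hc, xiF_conj] at hv
  have : conj (logDeriv xiF s) = - logDeriv xiF s := by
    rw [logDeriv_apply, map_div₀, ← hv, ← hd2]
    rw [hd]; ring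
  have := congrArg Complex.re this
  simp only [Complex.conj_re, Complex.neg_re] at this
  linarith

/-- Assuming the Riemann Hypothesis, for every real `t` with `ζ(1/2 + it) ≠ 0`,
`-Re(ζ'(1/2+it)/ζ(1/2+it)) = Re(1/(it - 1/2)) - (1/2)·log π
  + (1/2)·Re(Γ'(5/4 + it/2)/Γ(5/4 + it/2))`. -/
theorem rh_implies_critical_line_identity
    (hRH : ∀ ρ : ℂ, riemannZeta ρ = 0 → 0 < ρ.re → ρ.re < 1 → ρ.re = 1 / 2) :
    ∀ t : ℝ, riemannZeta (1 / 2 + t * Complex.I) ≠ 0 →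
      -(deriv riemannZeta (1 / 2 + t * Complex.I) /
          riemannZeta (1 / 2 + t * Complex.I)).re =
        (1 / (t * Complex.I - 1 / 2)).re - (1 / 2) * Real.log Real.pi +
          (1 / 2) * (deriv Complex.Gamma (5 / 4 + t * Complex.I / 2) /
            Complex.Gamma (5 / 4 + t * Complex.I / 2)).re := by
  intro t ht
  set s : ℂ := 1 / 2 + t * Complex.I with hsdef
  have hre : s.re = 1 / 2 := by simp [hsdef]
  have hs1 : s ≠ 1 := by
    intro h; rw [h] at hre; norm_num at hre
  have hs2 : 0 < (s / 2).re := by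
    rw [show s / 2 = ((1 / 2 : ℝ) : ℂ) * s by push_cast; ring, Complex.re_ofReal_mul, hre]
    norm_num
  have hm : ∀ m : ℕ, s / 2 ≠ -m := by
    intro m h
    rw [h] at hs2
    simp only [Complex.neg_re, Complex.natCast_re] at hs2
    have : (0 : ℝ) ≤ m := m.cast_nonneg
    linarith
  have hG0 : Complex.Gamma (s / 2) ≠ 0 := Complex.Gamma_ne_zero hm
  have hGd := Complex.differentiableAt_Gamma _ hm
  have hz : DifferentiableAt ℂ riemannZeta s := differentiableAt_riemannZeta hs1
  have hE : HasDerivAt (fun z : ℂ => Complex.exp (-(Real.log Real.pi : ℂ) * z / 2))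
      (Complex.exp (-(Real.log Real.pi : ℂ) * s / 2) * (-(Real.log Real.pi : ℂ) * 1 / 2)) s :=
    (((hasDerivAt_id s).const_mul _).div_const 2).cexp
  have hg : HasDerivAt (fun z : ℂ => Complex.Gamma (z / 2))
      (deriv Complex.Gamma (s / 2) * (1 / 2)) s :=
    hGd.hasDerivAt.comp s ((hasDerivAt_id s).div_const 2)
  have hF := ((hE.mul hg).mul hz.hasDerivAt).deriv
  have hL : logDeriv xiF s = -(Real.log Real.pi : ℂ) / 2 + Complex.digamma (s / 2) / 2
      + deriv riemannZeta s / riemannZeta s := by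
    rw [logDeriv_apply, Complex.digamma_def, logDeriv_apply]
    have hx : deriv xiF s = _ := hF
    rw [hx, xiF]
    have := Complex.exp_ne_zero (-(Real.log Real.pi : ℂ) * s / 2)
    simp only [Pi.mul_apply]
    field_simp
  have h0 := xiF_logDeriv_re s hre
  have hdig := Complex.digamma_apply_add_one (s / 2) hm
  have h54 : (5 / 4 + t * Complex.I / 2 : ℂ) = s / 2 + 1 := by rw [hsdef]; ring
  have e1 : deriv Complex.Gamma (s / 2 + 1) / Complex.Gamma (s / 2 + 1)
      = Complex.digamma (s / 2 + 1) := rfl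
  rw [h54, e1, hdig]
  have hcan : (1 / (t * Complex.I - 1 / 2) : ℂ).re + (1 / 2) * ((s / 2)⁻¹).re = 0 := by
    have h2 : (s / 2)⁻¹ = ((2 : ℝ) : ℂ) * s⁻¹ := by
      push_cast; rw [inv_div, div_eq_mul_inv]
    rw [h2, Complex.re_ofReal_mul, one_div, Complex.inv_re, Complex.inv_re]
    simp only [hsdef, Complex.normSq_apply]
    simp
    ring
  rw [hL] at h0
  have e2 : (-(Real.log Real.pi : ℂ) / 2 + Complex.digamma (s / 2) / 2).re
      = -Real.log Real.pi / 2 + (Complex.digamma (s / 2)).re / 2 := by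
    rw [show (-(Real.log Real.pi : ℂ) / 2 + Complex.digamma (s / 2) / 2)
      = ((1 / 2 : ℝ) : ℂ) * (((-Real.log Real.pi : ℝ) : ℂ) + Complex.digamma (s / 2)) by
        push_cast; ring, Complex.re_ofReal_mul, Complex.add_re, Complex.ofReal_re]
    ring
  rw [Complex.add_re, e2] at h0
  try rw [one_div (s / 2)]
  rw [Complex.add_re]
  linarith
end

section
/- Assume the Riemann Hypothesis. Then there exist constants C > 0 and T₀ > 0 such that for every real t > T₀ with ζ(1/2 + it) ≠ 0, one has |−Re(ζ'(1/2+it)/ζ(1/2+it)) − (1/2)·log(t/(2π))| ≤ C/t². -/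
open Complex Real

lemma norm_GammaSeq_le {s : ℂ} (hs : 0 < s.re) {n : ℕ} (hn : n ≠ 0) :
    ‖Complex.GammaSeq s n‖ ≤ Real.Gamma s.re := by
  rw [Complex.GammaSeq_eq_approx_Gamma_integral hs hn, Real.Gamma_eq_integral hs]
  have hi := Real.GammaIntegral_convergent hs
  rw [intervalIntegral.integral_of_le (by positivity : (0:ℝ) ≤ n)]
  refine (MeasureTheory.norm_integral_le_of_norm_le
    (hi.mono_set Set.Ioc_subset_Ioi_self) ?_).trans
    (MeasureTheory.setIntegral_mono_set hi ?_ ?_)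
  · rw [MeasureTheory.ae_restrict_iff' measurableSet_Ioc]
    filter_upwards with x hx
    rw [norm_mul, Complex.norm_of_nonneg
          (pow_nonneg (sub_nonneg.mpr <| div_le_one_of_le₀ hx.2 <| by positivity) _),
          norm_cpow_eq_rpow_re_of_pos hx.1, sub_re, one_re]
    have := hx.1
    gcongr
    exact one_sub_div_pow_le_exp_neg hx.2
  · rw [Filter.EventuallyLE, MeasureTheory.ae_restrict_iff' measurableSet_Ioi]
    filter_upwards with x hx
    have : (0:ℝ) < x := hx
    simp only [Pi.zero_apply]
    positivity
  · exact Filter.Eventually.of_forall fun x hx => hx.1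

lemma add_nat_ne_zero {s : ℂ} (hs : 0 < s.re) (j : ℕ) : s + j ≠ 0 := by
  intro h
  have := congrArg Complex.re h
  simp at this
  have : (0:ℝ) ≤ j := by positivity
  linarith

lemma differentiableAt_GammaSeq {s : ℂ} (hs : 0 < s.re) {n : ℕ} (hn : n ≠ 0) :
    DifferentiableAt ℂ (fun z => Complex.GammaSeq z n) s := by
  unfold Complex.GammaSeq
  have hn' : (n : ℂ) ≠ 0 := Nat.cast_ne_zero.mpr hn
  refine DifferentiableAt.div (DifferentiableAt.mul_const ?_ _) ?_ ?_
  · exact differentiableAt_id.const_cpow (Or.inl hn')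
  · fun_prop
  · exact Finset.prod_ne_zero_iff.mpr fun j _ => add_nat_ne_zero hs j

lemma logDeriv_GammaSeq {s : ℂ} (hs : 0 < s.re) {n : ℕ} (hn : n ≠ 0) :
    logDeriv (fun z => Complex.GammaSeq z n) s =
      Complex.log n - ∑ j ∈ Finset.range (n + 1), 1 / (s + j) := by
  have hn' : (n : ℂ) ≠ 0 := Nat.cast_ne_zero.mpr hn
  have hf : (n.factorial : ℂ) ≠ 0 := Nat.cast_ne_zero.mpr n.factorial_ne_zero
  have hd : DifferentiableAt ℂ (fun z : ℂ => (n:ℂ) ^ z) s :=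
    differentiableAt_id.const_cpow (Or.inl hn')
  have hp : (n : ℂ) ^ s ≠ 0 := by simp [cpow_eq_zero_iff, hn']
  unfold Complex.GammaSeq
  rw [logDeriv_div (f := fun z => (n:ℂ)^z * n.factorial) s (mul_ne_zero hp hf)
    (Finset.prod_ne_zero_iff.mpr fun j _ => add_nat_ne_zero hs j) (hd.mul_const _) (by fun_prop),
    logDeriv_mul_const _ _ hf, logDeriv_prod (fun j _ => add_nat_ne_zero hs j)
      (fun j _ => by fun_prop)]
  congr 1
  · have e : deriv (fun z : ℂ => (n:ℂ) ^ z) s = (n:ℂ) ^ s * Complex.log n * 1 :=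
      (HasDerivAt.const_cpow (hasDerivAt_id s) (Or.inl hn')).deriv
    rw [logDeriv_apply, show deriv (HPow.hPow (n:ℂ)) s = _ from e]
    field_simp
  · refine Finset.sum_congr rfl fun j _ => ?_
    simp [logDeriv_apply]

lemma tendsto_deriv_GammaSeq {s : ℂ} (hs : 0 < s.re) :
    Filter.Tendsto (fun n : ℕ => deriv (fun z => Complex.GammaSeq z n) s) Filter.atTop
      (nhds (deriv Complex.Gamma s)) := by
  set R := s.re / 2 with hR
  have hR0 : 0 < R := by positivity
  have hre : ∀ z ∈ Metric.closedBall s R, R ≤ z.re ∧ z.re ≤ 3 * R := by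
    intro z hz
    have h1 : ‖z - s‖ ≤ R := by simpa [dist_eq_norm] using hz
    have h2 := (abs_re_le_norm (z - s)).trans h1
    rw [sub_re, abs_le] at h2
    constructor <;> linarith
  obtain ⟨K, hK⟩ : ∃ K, ∀ x ∈ Set.Icc R (3 * R), Real.Gamma x ≤ K := by
    have hc : ContinuousOn Real.Gamma (Set.Icc R (3 * R)) := fun x hx =>
      (Real.differentiableOn_Gamma_Ioi.continuousOn.mono
        (fun y hy => lt_of_lt_of_le hR0 hy.1)) x hx
    obtain ⟨K, hK⟩ := isCompact_Icc.bddAbove_image hc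
    exact ⟨K, fun x hx => hK ⟨x, hx, rfl⟩⟩
  have hcirc : ∀ θ, circleMap s R θ ∈ Metric.closedBall s R := fun θ =>
    circleMap_mem_closedBall s hR0.le θ
  have key : Filter.Tendsto (fun n : ℕ =>
      ∮ z in C(s, R), (1 / (z - s) ^ 2) • Complex.GammaSeq z n) Filter.atTop
      (nhds (∮ z in C(s, R), (1 / (z - s) ^ 2) • Complex.Gamma z)) := by
    unfold circleIntegral
    refine intervalIntegral.tendsto_integral_filter_of_dominated_convergence
      (fun _ => R * (1 / R ^ 2 * K)) ?_ ?_ (by simp) ?_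
    · filter_upwards [Filter.eventually_ne_atTop 0] with n hn
      refine Continuous.aestronglyMeasurable ?_
      have h1 : Continuous fun θ => Complex.GammaSeq (circleMap s R θ) n := by
        rw [continuous_iff_continuousAt]
        intro θ
        have hp : 0 < (circleMap s R θ).re := lt_of_lt_of_le hR0 (hre _ (hcirc θ)).1
        exact ContinuousAt.comp (g := fun z => Complex.GammaSeq z n)
          (differentiableAt_GammaSeq hp hn).continuousAt (continuous_circleMap s R).continuousAt
      have h2 : Continuous fun θ => 1 / (circleMap s R θ - s) ^ 2 := by
        refine continuous_const.div (by fun_prop) fun θ => ?_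
        simp [circleMap, hR0.ne']
      simp only [deriv_circleMap]
      exact ((continuous_circleMap 0 R).mul continuous_const).smul (h2.smul h1)
    · filter_upwards [Filter.eventually_ne_atTop 0] with n hn
      filter_upwards with θ _
      have hp := hre _ (hcirc θ)
      rw [norm_smul, norm_smul]
      have e1 : ‖deriv (circleMap s R) θ‖ = R := by simp [deriv_circleMap, abs_of_pos hR0]
      have e2 : ‖1 / (circleMap s R θ - s) ^ 2‖ = 1 / R ^ 2 := by
        simp [circleMap, abs_of_pos hR0]
      rw [e1, e2]
      gcongr
      exact (norm_GammaSeq_le (lt_of_lt_of_le hR0 hp.1) hn).trans (hK _ hp)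
    · filter_upwards with θ _
      exact ((Complex.GammaSeq_tendsto_Gamma _).const_smul _).const_smul _
  have hG : DifferentiableOn ℂ Complex.Gamma (Metric.closedBall s R) := fun z hz =>
    (Complex.differentiableAt_Gamma z fun m h => by
      have := (hre z hz).1
      rw [h] at this
      simp at this
      have : (0:ℝ) ≤ m := by positivity
      linarith).differentiableWithinAt
  rw [hG.deriv_eq_smul_circleIntegral hR0] at key
  have h2 : (2 * π * I : ℂ) ≠ 0 := by simp [Real.pi_ne_zero]
  have key2 := key.const_smul ((2 * π * I : ℂ)⁻¹)
  rw [inv_smul_smul₀ h2] at key2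
  refine key2.congr' ?_
  filter_upwards [Filter.eventually_ne_atTop 0] with n hn
  have hS : DifferentiableOn ℂ (fun z => Complex.GammaSeq z n) (Metric.closedBall s R) :=
    fun z hz => (differentiableAt_GammaSeq (lt_of_lt_of_le hR0 (hre z hz).1)
      hn).differentiableWithinAt
  rw [hS.deriv_eq_smul_circleIntegral hR0, inv_smul_smul₀ h2]

lemma tendsto_digamma {s : ℂ} (hs : 0 < s.re) :
    Filter.Tendsto (fun n : ℕ => Complex.log n - ∑ j ∈ Finset.range (n + 1), 1 / (s + j))
      Filter.atTop (nhds (logDeriv Complex.Gamma s)) := by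
  rw [logDeriv_apply]
  refine ((tendsto_deriv_GammaSeq hs).div (Complex.GammaSeq_tendsto_Gamma s)
    (Complex.Gamma_ne_zero_of_re_pos hs)).congr' ?_
  filter_upwards [Filter.eventually_ne_atTop 0] with n hn
  rw [← logDeriv_GammaSeq hs hn]
  rfl

lemma log_quot_bound {a : ℂ} (ha : ‖a‖ ≤ 1 / 2) :
    ‖2 * a / (1 - a ^ 2) - (Complex.log (1 + a) - Complex.log (1 - a))‖ ≤ 4 * ‖a‖ ^ 3 := by
  have h1 : ‖a‖ < 1 := by linarith
  have b1 := Complex.norm_log_sub_logTaylor_le 2 h1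
  have b2 := Complex.norm_log_sub_logTaylor_le 2 (z := -a) (by rwa [norm_neg])
  simp only [Complex.logTaylor_succ, Complex.logTaylor_zero, norm_neg] at b1 b2
  have hinv : (1 - ‖a‖)⁻¹ ≤ 2 := by
    rw [inv_le_comm₀ (by linarith) (by norm_num)]; linarith
  have hc : ‖a‖ ^ (2 + 1) * (1 - ‖a‖)⁻¹ / ((2 : ℕ) + 1) ≤ 2 / 3 * ‖a‖ ^ 3 := by
    have : ‖a‖ ^ 3 * (1 - ‖a‖)⁻¹ ≤ ‖a‖ ^ 3 * 2 := by gcongr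
    norm_num
    linarith
  have hn2 : ‖a ^ 2‖ ≤ 1 / 4 := by
    rw [norm_pow]; nlinarith [norm_nonneg a]
  have hden : 3 / 4 ≤ ‖1 - a ^ 2‖ := by
    have := norm_sub_norm_le (1 : ℂ) (a ^ 2)
    rw [norm_one] at this
    linarith
  have hne : 1 - a ^ 2 ≠ 0 := by
    intro h; rw [h, norm_zero] at hden; linarith
  have b3 : ‖2 * a / (1 - a ^ 2) - 2 * a‖ ≤ 8 / 3 * ‖a‖ ^ 3 := by
    have : 2 * a / (1 - a ^ 2) - 2 * a = 2 * a ^ 3 / (1 - a ^ 2) := by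
      field_simp; ring
    rw [this, norm_div, norm_mul, norm_pow, div_le_iff₀ (by linarith)]
    have : 0 ≤ ‖a‖ ^ 3 := by positivity
    norm_num
    nlinarith
  have e : 2 * a / (1 - a ^ 2) - (Complex.log (1 + a) - Complex.log (1 - a)) =
      (2 * a / (1 - a ^ 2) - 2 * a) - (Complex.log (1 + a) - (a - a ^ 2 / 2))
        + (Complex.log (1 + -a) - (-a - a ^ 2 / 2)) := by
    rw [← sub_eq_add_neg]; ring
  rw [e]
  have b1' : ‖Complex.log (1 + a) - (a - a ^ 2 / 2)‖ ≤ 2 / 3 * ‖a‖ ^ 3 := by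
    refine le_trans (le_of_eq ?_) (b1.trans hc)
    congr 1
    simp
    ring
  have b2' : ‖Complex.log (1 + -a) - (-a - a ^ 2 / 2)‖ ≤ 2 / 3 * ‖a‖ ^ 3 := by
    refine le_trans (le_of_eq ?_) (b2.trans hc)
    congr 1
    simp
    ring
  refine (norm_add_le _ _).trans ?_
  have := norm_sub_le (2 * a / (1 - a ^ 2) - 2 * a) (Complex.log (1 + a) - (a - a ^ 2 / 2))
  linarith

lemma trap_bound {w : ℂ} (hre : 0 < w.re) (him : 1 ≤ w.im) :
    |(1 / w).re / 2 + (1 / (w + 1)).re / 2 - (Real.log ‖w + 1‖ - Real.log ‖w‖)| ≤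
      8 * (1 / (w.re + w.im) ^ 2 - 1 / (w.re + w.im + 1) ^ 2) := by
  set v := w.re + w.im with hv
  have hv1 : 1 ≤ v := by linarith
  have hw : w ≠ 0 := by rintro rfl; simp at hre
  have hw1 : w + 1 ≠ 0 := by
    intro h; have := congrArg Complex.re h; simp at this; linarith
  have hw2 : 2 * w + 1 ≠ 0 := by
    intro h; have := congrArg Complex.re h; simp at this; linarith
  have hnorm : v ≤ ‖2 * w + 1‖ := by
    apply le_of_sq_le_sq ?_ (norm_nonneg _) |> id
    rw [Complex.sq_norm, Complex.normSq_apply]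
    simp
    nlinarith [sq_nonneg (w.re - w.im)]
  have hnorm2 : 2 ≤ ‖2 * w + 1‖ := by
    have := Complex.abs_im_le_norm (2 * w + 1)
    simp at this
    have h2 := le_abs_self w.im
    linarith
  set a := 1 / (2 * w + 1) with ha
  have hna : ‖a‖ = 1 / ‖2 * w + 1‖ := by simp [ha]
  have hna1 : ‖a‖ ≤ 1 / 2 := by rw [hna]; gcongr
  have hnav : ‖a‖ ≤ 1 / v := by rw [hna]; gcongr
  have hp1 : 1 + a = 2 * (w + 1) * a := by rw [ha]; field_simp; ring
  have hm1 : 1 - a = 2 * w * a := by rw [ha]; field_simp; ring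
  have ha0 : a ≠ 0 := by rw [ha]; exact one_div_ne_zero hw2
  have key := (Complex.abs_re_le_norm _).trans (log_quot_bound hna1)
  have e1 : 2 * a / (1 - a ^ 2) = (1 / w) / 2 + (1 / (w + 1)) / 2 := by
    rw [show 1 - a ^ 2 = (1 + a) * (1 - a) by ring, hp1, hm1, ha]
    field_simp
    ring
  have e2 : (Complex.log (1 + a)).re - (Complex.log (1 - a)).re =
      Real.log ‖w + 1‖ - Real.log ‖w‖ := by
    rw [Complex.log_re, Complex.log_re, hp1, hm1]
    simp only [norm_mul]
    have n1 := norm_ne_zero_iff.mpr ha0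
    have n2 := norm_ne_zero_iff.mpr hw
    have n3 := norm_ne_zero_iff.mpr hw1
    have n4 : ‖(2:ℂ)‖ ≠ 0 := by simp
    rw [Real.log_mul (mul_ne_zero n4 n3) n1, Real.log_mul (mul_ne_zero n4 n2) n1,
      Real.log_mul n4 n3, Real.log_mul n4 n2]
    ring
  rw [e1, Complex.sub_re, Complex.sub_re, e2, Complex.add_re] at key
  have d1 : ((1 / w) / 2).re = (1 / w).re / 2 := by simp
  have d2 : ((1 / (w + 1)) / 2).re = (1 / (w + 1)).re / 2 := by simp
  rw [d1, d2] at key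
  refine key.trans ?_
  have h3 : ‖a‖ ^ 3 ≤ (1 / v) ^ 3 := by gcongr
  have h4 : (1 / v) ^ 3 ≤ 2 * (1 / v ^ 2 - 1 / (v + 1) ^ 2) := by
    have : 2 * (1 / v ^ 2 - 1 / (v + 1) ^ 2) - (1 / v) ^ 3 =
        (2 * v * (2 * v + 1) - (v + 1) ^ 2) / (v ^ 3 * (v + 1) ^ 2) := by
      field_simp; ring
    have h5 : 0 ≤ (2 * v * (2 * v + 1) - (v + 1) ^ 2) / (v ^ 3 * (v + 1) ^ 2) := by
      apply div_nonneg
      · nlinarith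
      · positivity
    linarith
  linarith

lemma sum_bound {s : ℂ} (hre : 0 < s.re) (him : 1 ≤ s.im) (m : ℕ) :
    |(∑ j ∈ Finset.range m, 1 / (s + j)).re -
      ((Real.log ‖s + m‖ - (1 / (s + m)).re / 2) - (Real.log ‖s‖ - (1 / s).re / 2))| ≤
      8 * (1 / (s.re + s.im) ^ 2 - 1 / (s.re + s.im + m) ^ 2) := by
  induction m with
  | zero => simp
  | succ m ih =>
    have h := trap_bound (w := s + m) (by simp; positivity) (by simpa using him)
    have r1 : (s + m).re + (s + m).im = s.re + s.im + m := by simp; ring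
    rw [r1] at h
    rw [Finset.sum_range_succ, Complex.add_re]
    push_cast
    rw [← add_assoc, ← add_assoc]
    rw [abs_le] at h ih ⊢
    constructor <;> linarith [h.1, h.2, ih.1, ih.2]

lemma re_digamma_bound {s : ℂ} (hre : 0 < s.re) (him : 1 ≤ s.im) :
    |(logDeriv Complex.Gamma s).re - (Real.log ‖s‖ - (1 / s).re / 2)| ≤ 8 / s.im ^ 2 := by
  have h1 := (Complex.continuous_re.tendsto _).comp (tendsto_digamma hre)
  have hinv : Filter.Tendsto (fun n : ℕ => 1 / (s + (n + 1 : ℕ))) Filter.atTop (nhds 0) := by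
    rw [tendsto_zero_iff_norm_tendsto_zero]
    refine squeeze_zero (fun _ => norm_nonneg _) (fun n => ?_)
      (tendsto_one_div_add_atTop_nhds_zero_nat (𝕜 := ℝ))
    rw [norm_div, norm_one]
    have := (le_abs_self _).trans (Complex.abs_re_le_norm (s + (n + 1 : ℕ)))
    simp at this
    have h2 : (0:ℝ) ≤ n := by positivity
    apply one_div_le_one_div_of_le (by positivity)
    push_cast
    linarith
  have hlog : Filter.Tendsto (fun n : ℕ => Real.log ‖s + (n + 1 : ℕ)‖ - Real.log n)
      Filter.atTop (nhds 0) := by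
    have t1 : Filter.Tendsto (fun n : ℕ => 1 + (s + 1) / (n : ℂ)) Filter.atTop (nhds (1 + 0)) :=
      tendsto_const_nhds.add (tendsto_const_div_atTop_nhds_zero_nat _)
    have t2 := (t1.norm).log (by simp)
    simp only [add_zero, norm_one, Real.log_one] at t2
    refine t2.congr' ?_
    filter_upwards [Filter.eventually_ne_atTop 0] with n hn
    have hn' : (n : ℂ) ≠ 0 := Nat.cast_ne_zero.mpr hn
    have : 1 + (s + 1) / (n : ℂ) = (s + (n + 1 : ℕ)) / n := by
      push_cast; field_simp; ring
    rw [this, norm_div, Real.log_div, Complex.norm_natCast]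
    · exact norm_ne_zero_iff.mpr (add_nat_ne_zero hre _)
    · simpa using hn
  have h2 := (h1.add hlog).sub
    (((Complex.continuous_re.tendsto _).comp hinv).div_const 2)
  have h3 := (h2.sub_const (Real.log ‖s‖ - (1 / s).re / 2)).abs
  simp only [Complex.zero_re, zero_div, add_zero, sub_zero] at h3
  refine le_of_tendsto h3 ?_
  filter_upwards with n
  have hb := sum_bound hre him (n + 1)
  have hl : (Complex.log (n : ℂ)).re = Real.log n := by
    rw [Complex.log_re, Complex.norm_natCast]
  have hb2 : 8 * (1 / (s.re + s.im) ^ 2 - 1 / (s.re + s.im + (n + 1 : ℕ)) ^ 2) ≤ 8 / s.im ^ 2 := by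
    have p : 0 ≤ 1 / (s.re + s.im + (n + 1 : ℕ)) ^ 2 := by positivity
    have q : 1 / (s.re + s.im) ^ 2 ≤ 1 / s.im ^ 2 := by
      apply one_div_le_one_div_of_le (by positivity)
      gcongr
      linarith
    have : 8 / s.im ^ 2 = 8 * (1 / s.im ^ 2) := by ring
    linarith
  refine le_trans (le_of_eq ?_) (hb.trans hb2)
  rw [← abs_neg]
  congr 1
  simp only [Function.comp_apply, Complex.sub_re, hl]
  ring

lemma Gammaℝ_conj' (s : ℂ) :
    Complex.Gammaℝ ((starRingEnd ℂ) s) = (starRingEnd ℂ) (Complex.Gammaℝ s) := by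
  rw [Complex.Gammaℝ_def, Complex.Gammaℝ_def, map_mul, ← Complex.Gamma_conj]
  have h := Complex.cpow_conj (π : ℂ) (-s / 2)
    (by rw [Complex.arg_ofReal_of_nonneg Real.pi_pos.le]; exact Real.pi_pos.ne)
  simp only [Complex.conj_ofReal] at h
  rw [← h]
  have h2 : (starRingEnd ℂ) 2 = 2 := Complex.conj_ofNat 2
  simp [h2]

lemma completed_eq {s : ℂ} (hs : 0 < s.re) :
    completedRiemannZeta s = riemannZeta s * Complex.Gammaℝ s := by
  have h0 : s ≠ 0 := by rintro rfl; simp at hs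
  rw [riemannZeta_def_of_ne_zero h0, div_mul_cancel₀ _ (Complex.Gammaℝ_ne_zero_of_re_pos hs)]

lemma completed_conj {s : ℂ} (hs : 0 < s.re) :
    (starRingEnd ℂ) (completedRiemannZeta ((starRingEnd ℂ) s)) = completedRiemannZeta s := by
  rw [completed_eq hs, completed_eq (by simpa using hs), riemannZeta_conj, Gammaℝ_conj']
  simp

lemma re_logDeriv_completed {s : ℂ} (hs : s.re = 1 / 2) :
    (logDeriv completedRiemannZeta s).re = 0 := by
  have hc : (starRingEnd ℂ) s = 1 - s := by
    apply Complex.ext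
    · simp [hs]; norm_num
    · simp
  have hpos : 0 < s.re := by rw [hs]; norm_num
  have hv := completed_conj hpos
  rw [hc, completedRiemannZeta_one_sub] at hv
  have hd1 : deriv completedRiemannZeta s = -deriv completedRiemannZeta (1 - s) := by
    have : (fun z => completedRiemannZeta (1 - z)) = completedRiemannZeta :=
      funext completedRiemannZeta_one_sub
    conv_lhs => rw [← this]
    rw [deriv_comp_const_sub]
  have hd2 : (starRingEnd ℂ) (deriv completedRiemannZeta ((starRingEnd ℂ) s)) =
      deriv completedRiemannZeta s := by
    have h := congrFun (deriv_conj_conj (f := completedRiemannZeta)) s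
    simp only [Function.comp_apply] at h
    rw [← h]
    apply Filter.EventuallyEq.deriv_eq
    filter_upwards [(isOpen_lt continuous_const Complex.continuous_re).mem_nhds hpos] with z hz
    exact completed_conj hz
  rw [hc] at hd2
  have hd3 : deriv completedRiemannZeta (1 - s) = -deriv completedRiemannZeta s := by
    rw [hd1, neg_neg]
  rw [hd3, map_neg] at hd2
  have : (starRingEnd ℂ) (logDeriv completedRiemannZeta s) = -logDeriv completedRiemannZeta s := by
    rw [logDeriv_apply, map_div₀, hv, ← neg_div]
    congr 1
    rw [← neg_eq_iff_eq_neg]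
    exact hd2
  have h := congrArg Complex.re this
  simp at h
  linarith

lemma logDeriv_Gammaℝ {s : ℂ} (hs : 0 < s.re) :
    logDeriv Complex.Gammaℝ s = -(Real.log π : ℂ) / 2 + logDeriv Complex.Gamma (s / 2) / 2 := by
  have hpi : (π : ℂ) ≠ 0 := by exact_mod_cast Real.pi_ne_zero
  have hs2 : 0 < (s / 2).re := by simpa using hs
  have hG : DifferentiableAt ℂ Complex.Gamma (s / 2) :=
    Complex.differentiableAt_Gamma _ fun m h => by
      rw [h] at hs2
      simp at hs2
      have : (0:ℝ) ≤ m := by positivity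
      linarith
  have hd0 : HasDerivAt (fun z : ℂ => -z / 2) (-1 / 2) s :=
    ((hasDerivAt_id s).neg).div_const 2
  have hd : HasDerivAt (fun z : ℂ => (π : ℂ) ^ (-z / 2)) _ s := hd0.const_cpow (Or.inl hpi)
  have hp : (π : ℂ) ^ (-s / 2) ≠ 0 := by simp [cpow_eq_zero_iff, hpi]
  have hh : DifferentiableAt ℂ (fun z : ℂ => z / 2) s := by fun_prop
  have e : Complex.Gammaℝ = fun z => (π : ℂ) ^ (-z / 2) * (Complex.Gamma ∘ fun z => z / 2) z := rfl
  rw [e, logDeriv_mul (f := fun z : ℂ => (π : ℂ) ^ (-z / 2))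
    (g := Complex.Gamma ∘ fun z => z / 2) s hp (Complex.Gamma_ne_zero_of_re_pos hs2) hd.differentiableAt
    (DifferentiableAt.comp (g := Complex.Gamma) (f := fun z : ℂ => z / 2) s hG hh),
    logDeriv_comp (g := fun z : ℂ => z / 2) (x := s) hG hh]
  congr 1
  · rw [logDeriv_apply, hd.deriv, Complex.ofReal_log Real.pi_pos.le]
    field_simp
  · simp
    ring

lemma differentiableAt_Gammaℝ {s : ℂ} (hs : 0 < s.re) : DifferentiableAt ℂ Complex.Gammaℝ s := by
  have h := (Complex.differentiable_Gammaℝ_inv s).inv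
    (inv_ne_zero (Complex.Gammaℝ_ne_zero_of_re_pos hs))
  have e : (fun s => (Complex.Gammaℝ s)⁻¹)⁻¹ = Complex.Gammaℝ := by
    ext z; simp
  rwa [e] at h

lemma re_logDeriv_zeta {s : ℂ} (hs : s.re = 1 / 2) (hz : riemannZeta s ≠ 0) :
    -(deriv riemannZeta s / riemannZeta s).re =
      -Real.log π / 2 + (logDeriv Complex.Gamma (s / 2)).re / 2 := by
  have hpos : 0 < s.re := by rw [hs]; norm_num
  have h1 : s ≠ 1 := by rintro rfl; norm_num at hs
  have hL : logDeriv completedRiemannZeta s =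
      logDeriv riemannZeta s + logDeriv Complex.Gammaℝ s := by
    rw [← logDeriv_mul s hz (Complex.Gammaℝ_ne_zero_of_re_pos hpos)
      (differentiableAt_riemannZeta h1) (differentiableAt_Gammaℝ hpos)]
    apply (logDeriv_congr_nhds _).eq_of_nhds
    filter_upwards [(isOpen_lt continuous_const Complex.continuous_re).mem_nhds hpos] with z hz
    exact completed_eq hz
  have h := congrArg Complex.re hL
  rw [re_logDeriv_completed hs, logDeriv_Gammaℝ hpos, logDeriv_apply] at h
  have d : (-(Real.log π : ℂ) / 2 + logDeriv Complex.Gamma (s / 2) / 2).re =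
      -Real.log π / 2 + (logDeriv Complex.Gamma (s / 2)).re / 2 := by
    simp only [Complex.add_re, Complex.div_ofNat_re, Complex.neg_re, Complex.ofReal_re]
  rw [Complex.add_re, d] at h
  linarith

/-- Assuming the Riemann Hypothesis, there exist `C > 0` and `T₀ > 0` such that
for every real `t > T₀` with `ζ(1/2 + it) ≠ 0`,
`|-Re(ζ'(1/2+it)/ζ(1/2+it)) - (1/2)·log(t/(2π))| ≤ C/t²`. -/
theorem rh_implies_critical_line_asymptotics
    (hRH : ∀ ρ : ℂ, riemannZeta ρ = 0 → 0 < ρ.re → ρ.re < 1 → ρ.re = 1 / 2) :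
    ∃ C > (0 : ℝ), ∃ T₀ > (0 : ℝ), ∀ t : ℝ, T₀ < t →
      riemannZeta (1 / 2 + t * Complex.I) ≠ 0 →
      |(-(deriv riemannZeta (1 / 2 + t * Complex.I) /
            riemannZeta (1 / 2 + t * Complex.I)).re) -
          (1 / 2) * Real.log (t / (2 * Real.pi))| ≤ C / t ^ 2 := by
  refine ⟨20, by norm_num, 2, by norm_num, fun t ht hz => ?_⟩
  set s : ℂ := 1 / 2 + t * Complex.I with hs
  have hsre : s.re = 1 / 2 := by simp [hs]
  have hsim : s.im = t := by simp [hs]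
  have ht0 : 0 < t := by linarith
  rw [re_logDeriv_zeta hsre hz]
  set w := s / 2 with hw
  have hwre : w.re = 1 / 4 := by simp [hw, hsre]; norm_num
  have hwim : w.im = t / 2 := by simp [hw, hsim]
  have hb := re_digamma_bound (s := w) (by rw [hwre]; norm_num) (by rw [hwim]; linarith)
  rw [hwim] at hb
  have hns : Complex.normSq w = 1 / 16 + t ^ 2 / 4 := by
    rw [Complex.normSq_apply, hwre, hwim]; ring
  have hinv : (1 / w).re = (1 / 4) / (1 / 16 + t ^ 2 / 4) := by
    rw [one_div, Complex.inv_re, hns, hwre]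
  have hi0 : 0 ≤ (1 / w).re := by rw [hinv]; positivity
  have hi1 : (1 / w).re ≤ 1 / t ^ 2 := by
    rw [hinv, div_le_div_iff₀ (by positivity) (by positivity)]; nlinarith
  have hlog : Real.log ‖w‖ = Real.log (t / 2) + Real.log (1 + 1 / (4 * t ^ 2)) / 2 := by
    have h2 : Real.log (‖w‖ ^ 2) = Real.log ((t / 2) ^ 2 * (1 + 1 / (4 * t ^ 2))) := by
      rw [Complex.sq_norm, hns]
      congr 1
      field_simp
      ring
    rw [Real.log_pow, Real.log_mul (by positivity) (by positivity), Real.log_pow] at h2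
    push_cast at h2
    linarith
  have hl0 : 0 ≤ Real.log (1 + 1 / (4 * t ^ 2)) :=
    Real.log_nonneg (by have : 0 ≤ 1 / (4 * t ^ 2) := by positivity
                        linarith)
  have hl1 : Real.log (1 + 1 / (4 * t ^ 2)) ≤ 1 / t ^ 2 := by
    have h := Real.log_le_sub_one_of_pos (x := 1 + 1 / (4 * t ^ 2)) (by positivity)
    have h2 : 1 / (4 * t ^ 2) ≤ 1 / t ^ 2 := by
      apply one_div_le_one_div_of_le (by positivity); nlinarith
    linarith
  have hL : Real.log (t / (2 * π)) = Real.log (t / 2) - Real.log π := by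
    rw [← Real.log_div (by positivity) Real.pi_ne_zero, div_div]
  have h8 : 8 / (t / 2) ^ 2 = 32 * (1 / t ^ 2) := by field_simp; norm_num
  have h20 : 20 / t ^ 2 = 20 * (1 / t ^ 2) := by ring
  rw [hlog, h8, abs_le] at hb
  rw [hL, h20, abs_le]
  constructor <;> linarith [hb.1, hb.2]
end

section
/- Let X be a Dirichlet character modulo q with q ≥ 1, let L(s, X) denote its analytically continued L-function and L'(s,X) the derivative in s, and let T₀ > 0. Suppose that for every complex number s = σ + it with σ > 1/2 and t > T₀ at which L(s,X) ≠ 0 one has −Re(L'(s,X)/L(s,X)) ≤ (1/2)·log(q·t/(2π)). Then L(·,X) has no zeros s with Re s > 1/2 and Im s > T₀. -/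
open Complex Real

/-- For a Dirichlet character `X` mod `q ≥ 1`, if for every `s = σ + it` with
`σ > 1/2`, `t > T₀` and `L(s,X) ≠ 0` one has `-Re(L'(s,X)/L(s,X)) ≤ (1/2)·log(q·t/(2π))`,
then `L(·,X)` has no zeros `s` with `Re s > 1/2` and `Im s > T₀`. -/
theorem grh_spectral_flow_bound_implies_no_zeros
    (q : ℕ) [NeZero q] (hq : 1 ≤ q) (X : DirichletCharacter ℂ q)
    (T₀ : ℝ) (hT₀ : 0 < T₀)
    (hbound : ∀ σ t : ℝ, 1 / 2 < σ → T₀ < t →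
      X.LFunction (σ + t * Complex.I) ≠ 0 →
      -(deriv X.LFunction (σ + t * Complex.I) /
          X.LFunction (σ + t * Complex.I)).re ≤
        (1 / 2) * Real.log (q * t / (2 * Real.pi))) :
    ∀ s : ℂ, 1 / 2 < s.re → T₀ < s.im → X.LFunction s ≠ 0 := by
  intro s hre him hzero
  have hpos : ∀ z : ℂ, 0 < z.im → z ≠ 1 := by
    rintro z hz rfl
    simp at hz
  have hopen : IsOpen {z : ℂ | 0 < z.im} := isOpen_lt continuous_const Complex.continuous_im
  have han : AnalyticOnNhd ℂ X.LFunction {z : ℂ | 0 < z.im} := by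
    refine DifferentiableOn.analyticOnNhd (fun z hz => ?_) hopen
    exact (X.differentiableAt_LFunction z (Or.inl (hpos z hz))).differentiableWithinAt
  have hs : s ∈ {z : ℂ | 0 < z.im} := hT₀.trans him
  have hne : ¬ ∀ᶠ z in nhds s, X.LFunction z = 0 := by
    intro h
    have h2 := han.eqOn_zero_of_preconnected_of_eventuallyEq_zero
      (convex_halfSpace_im_gt 0).isPreconnected hs h
    have h3 : (2 + Complex.I) ∈ {z : ℂ | 0 < z.im} := by simp
    refine X.LFunction_ne_zero_of_one_le_re (Or.inr (hpos _ h3)) ?_ (h2 h3)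
    simp
  obtain ⟨n, g, hg, hg0, hfg⟩ := (han s hs).exists_eventuallyEq_pow_smul_nonzero_iff.mpr hne
  have hn : n ≠ 0 := by
    rintro rfl
    have := hfg.self_of_nhds
    simp [hzero] at this
    exact hg0 this.symm
  have hn1 : (1 : ℝ) ≤ n := by exact_mod_cast Nat.one_le_iff_ne_zero.mpr hn
  -- formula for the logarithmic derivative near `s`
  have hlog : ∀ᶠ z in nhds s, z ≠ s → X.LFunction z ≠ 0 ∧
      deriv X.LFunction z / X.LFunction z = n / (z - s) + deriv g z / g z := by
    filter_upwards [hfg.eventually_nhds, hg.eventually_analyticAt,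
      hg.continuousAt.eventually_ne hg0] with z hz hgz hgz0 hzs
    have hzs' : z - s ≠ 0 := sub_ne_zero.mpr hzs
    have hval := hz.self_of_nhds
    have hd : deriv X.LFunction z = n * (z - s) ^ (n - 1) * g z + (z - s) ^ n * deriv g z := by
      rw [Filter.EventuallyEq.deriv_eq hz]
      have h1 : HasDerivAt (fun w : ℂ => (w - s) ^ n) (n * (z - s) ^ (n - 1)) z := by
        simpa using ((hasDerivAt_id z).sub_const s).fun_pow n
      exact (h1.mul hgz.differentiableAt.hasDerivAt).deriv
    rw [hd, hval, smul_eq_mul]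
    refine ⟨mul_ne_zero (pow_ne_zero _ hzs') hgz0, ?_⟩
    obtain ⟨m, rfl⟩ := Nat.exists_eq_succ_of_ne_zero hn
    simp only [Nat.succ_eq_add_one, Nat.add_sub_cancel]
    field_simp
    ring
  have hcont : ContinuousAt (fun z => ‖deriv g z / g z‖) s :=
    (hg.deriv.continuousAt.div hg.continuousAt hg0).norm
  have hbd : ∀ᶠ z in nhds s, ‖deriv g z / g z‖ < ‖deriv g s / g s‖ + 1 :=
    hcont.eventually_lt continuousAt_const (lt_add_one _)
  have hre' : ∀ᶠ z : ℂ in nhds s, 1 / 2 < z.re :=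
    Complex.continuous_re.continuousAt.eventually (lt_mem_nhds hre)
  set C := ‖deriv g s / g s‖ + 1
  set B := (1 / 2) * Real.log (q * s.im / (2 * Real.pi))
  have hpath : Filter.Tendsto (fun e : ℝ => s - (e : ℂ)) (nhdsWithin 0 (Set.Ioi 0)) (nhds s) := by
    have : Continuous (fun e : ℝ => s - (e : ℂ)) := by fun_prop
    simpa using (this.tendsto 0).mono_left nhdsWithin_le_nhds
  have hbig := (tendsto_inv_nhdsGT_zero (𝕜 := ℝ)).eventually_gt_atTop (B + C)
  obtain ⟨e, ⟨⟨h1, h2, h3⟩, h4⟩, h5⟩ := ((((hpath.eventually (hlog.and (hbd.and hre')))).and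
    hbig).and self_mem_nhdsWithin).exists
  have h5 : 0 < e := h5
  obtain ⟨h6, h7⟩ := h1 (by simp [h5.ne'])
  have hz : (((s - e).re : ℝ) : ℂ) + (s.im : ℝ) * Complex.I = s - e := by
    apply Complex.ext <;> simp
  have h8 := hbound (s - e).re s.im h3 him
  rw [hz] at h8
  have h9 := h8 h6
  rw [h7] at h9
  have h10 : ((n : ℂ) / (s - e - s)).re = -(n * e⁻¹) := by
    have : (n : ℂ) / (s - e - s) = ((-(n * e⁻¹) : ℝ) : ℂ) := by
      have : (e : ℂ) ≠ 0 := by exact_mod_cast h5.ne'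
      push_cast
      rw [sub_sub_cancel_left, div_neg, div_eq_mul_inv]
    rw [this, Complex.ofReal_re]
  rw [Complex.add_re, h10] at h9
  have h11 := (Complex.abs_re_le_norm (deriv g (s - e) / g (s - e)))
  have h12 := le_abs_self (deriv g (s - e) / g (s - e)).re
  have h13 : e⁻¹ ≤ n * e⁻¹ := le_mul_of_one_le_left (by positivity) hn1
  change _ ≤ B at h9
  linarith
end
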